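/- arXiv:2005.00934 — 4 statements merged into one kernel-verified Lean document; each statement's English description precedes it below -/
import Mathlib

section
/- Assume A_0(Θ) holds and that Y follows the Poisson autoregressive model with parameter θ* after time k*. Let r ≥ 1 be an integer and suppose there exists C_{r,0} > 0 such that E[Y_t^r] ≤ C_{r,0} for all integers t ≤ k*. Then there exists a constant C > 0 such that E[Y_{k*+ℓ}^r] ≤ C for all integers ℓ ≥ 1. -/
/-!
Since `E[N^r] ≤ (λ + r)^r` for `N` Poisson with mean `λ` (`poisson_moment_le`), the conditional law
of `Y_t` gives `E[Y_t^r] ≤ E[(λ_t + r)^r]` (`lintegral_pow_le`). Let `a = Σ α_k < 1`. The Lipschitz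
bound, taken against the zero sequence, gives `λ_t + r ≤ (1 - a) D + Σ α_k Y_{t-k}` with
`D = (|f_θ*(0)| + r) / (1 - a)`. The right side is a convex combination (the weights `1 - a` and
`α_k` sum to one), so Jensen's inequality (`tsum_mul_pow_le`) yields
`E[Y_t^r] ≤ (1 - a) D^r + Σ α_k E[Y_{t-k}^r]`. Hence the bound `C = max (C_{r,0}) (D^r)` propagates
from all times before `t` to time `t`.

Nonnegativity and measurability of `λ_t` are consequences of the Poisson property: the
conditional probabilities of `{Y_t = n}` are nonnegative and measurable up to null sets, and for
`n = 1` the sign is that of `λ_t`.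
-/

open MeasureTheory ProbabilityTheory Filter
open scoped ENNReal NNReal

noncomputable section

/-- The σ-algebra `𝓕_t = σ(Y_s : s ≤ t)` generated by the past of the process `Y` up to time `t`. -/
def pastSigma {Ω : Type*} (Y : ℤ → Ω → ℕ) (t : ℤ) : MeasurableSpace Ω :=
  ⨆ s : {s : ℤ // s ≤ t}, MeasurableSpace.comap (fun ω => Y s.1 ω) inferInstance

/-- The past `(Y_{t-1}, Y_{t-2}, …)` of the process `Y` at time `t`, as a sequence in `[0,∞)^ℕ`. -/
def past {Ω : Type*} (Y : ℤ → Ω → ℕ) (t : ℤ) (ω : Ω) : ℕ → ℝ :=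
  fun k => (Y (t - 1 - k) ω : ℝ)

/-- `Y` is conditionally Poisson at time `t` with conditional mean `λ_t = g(Y_{t-1}, Y_{t-2}, …)`:
`P(Y_t = n ∣ 𝓕_{t-1}) = e^{-λ_t} λ_t^n / n!` a.s. for every `n ∈ ℕ`. -/
def PoissonARAt {Ω : Type*} [MeasurableSpace Ω] (μ : Measure Ω) (Y : ℤ → Ω → ℕ)
    (g : (ℕ → ℝ) → ℝ) (t : ℤ) : Prop :=
  ∀ n : ℕ,
    (μ[(fun ω => if Y t ω = n then (1 : ℝ) else 0) | pastSigma Y (t - 1)]) =ᵐ[μ]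
      fun ω => Real.exp (-(g (past Y t ω))) * (g (past Y t ω)) ^ n / (n.factorial : ℝ)

/-- Assumption A₀(Θ) : `sup_{θ∈Θ} f_θ(0) < ∞` and there are nonnegative reals `(α_k)_{k≥1}`
(here `α (k+1)` is the coefficient of lag `k+1`) with `Σ_{k≥1} α_k < 1` and
`sup_{θ∈Θ} |f_θ(y) − f_θ(y')| ≤ Σ_{k≥1} α_k |y_k − y'_k|` for all `y, y' ∈ [0,∞)^ℕ`
(the inequality is stated in `[0,∞]` so that it is trivially true when the series diverges). -/
def AssumptionA0 {d : ℕ} (Θ : Set (Fin d → ℝ)) (f : (Fin d → ℝ) → (ℕ → ℝ) → ℝ)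
    (α : ℕ → ℝ) : Prop :=
  (∀ k, 0 ≤ α k) ∧ Summable α ∧ (∑' k : ℕ, α (k + 1)) < 1 ∧
    BddAbove ((fun θ => f θ (fun _ => 0)) '' Θ) ∧
    ∀ θ ∈ Θ, ∀ y y' : ℕ → ℝ, (∀ k, 0 ≤ y k) → (∀ k, 0 ≤ y' k) →
      ENNReal.ofReal |f θ y - f θ y'| ≤ ∑' k : ℕ, ENNReal.ofReal (α (k + 1) * |y k - y' k|)

/-- Moment bound for a Poisson law, characterised by its total mass and by the recursion
`(n + 1) p (n + 1) = L p n`. The recursion gives `m_{r+1} = L ∑ k, r.choose k * m_k` for the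
moments `m_k`, from which the bound follows by induction. -/
lemma poisson_moment_le (p : ℕ → ℝ≥0∞) (L : ℝ≥0∞) (hp : ∑' n, p n = 1)
    (hrec : ∀ n : ℕ, ((n : ℝ≥0∞) + 1) * p (n + 1) = L * p n) (r : ℕ) :
    ∑' n : ℕ, (n : ℝ≥0∞) ^ r * p n ≤ (L + r) ^ r := by
  induction r using Nat.strong_induction_on with
  | _ r ih =>
    cases r with
    | zero => simp [hp]
    | succ r =>
      have h1 : ∑' n : ℕ, (n : ℝ≥0∞) ^ (r + 1) * p n
          = L * ∑' n : ℕ, ((n : ℝ≥0∞) + 1) ^ r * p n := by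
        rw [tsum_eq_zero_add' ENNReal.summable, ← ENNReal.tsum_mul_left]
        simp only [Nat.cast_zero, ne_eq, Nat.succ_ne_zero, not_false_eq_true, zero_pow, zero_mul,
          zero_add]
        refine tsum_congr fun n => ?_
        push_cast
        rw [pow_succ, mul_assoc, hrec, mul_left_comm]
      have h2 : ∑' n : ℕ, ((n : ℝ≥0∞) + 1) ^ r * p n
          = ∑ k ∈ Finset.range (r + 1),
              (∑' n : ℕ, (n : ℝ≥0∞) ^ k * p n) * (r.choose k : ℝ≥0∞) := by
        simp_rw [add_pow, Finset.sum_mul, ← ENNReal.tsum_mul_right]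
        rw [Summable.tsum_finsetSum fun _ _ => ENNReal.summable]
        refine Finset.sum_congr rfl fun k _ => tsum_congr fun n => ?_
        ring
      have h3 : ∑ k ∈ Finset.range (r + 1),
              (∑' n : ℕ, (n : ℝ≥0∞) ^ k * p n) * (r.choose k : ℝ≥0∞)
          ≤ (L + r + 1) ^ r := by
        rw [add_pow (L + r) 1 r]
        refine Finset.sum_le_sum fun k hk => ?_
        have hk' : k ≤ r := Nat.lt_succ_iff.mp (Finset.mem_range.mp hk)
        rw [one_pow, mul_one]
        gcongr
        refine (ih k (Finset.mem_range.mp hk)).trans ?_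
        gcongr
      rw [h1, h2, pow_succ', Nat.cast_succ, ← add_assoc]
      refine mul_le_mul' ?_ h3
      rw [add_assoc]
      exact le_self_add

/-- Jensen's inequality for the power function and countably many weights of total mass one. -/
lemma tsum_mul_pow_le (w x : ℕ → ℝ≥0∞) (hw : ∑' k, w k = 1) {r : ℕ} (hr : 1 ≤ r) :
    (∑' k, w k * x k) ^ r ≤ ∑' k, w k * x k ^ r := by
  have hfin : ∀ s : Finset ℕ, (∑ k ∈ s, w k * x k) ^ r ≤ ∑' k, w k * x k ^ r := by
    intro s
    have hs : ∑ k ∈ s, w k ≤ 1 := hw ▸ ENNReal.sum_le_tsum s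
    -- The missing mass of the finite sum is placed at the value `0`, which `0 ^ r = 0` discards.
    have h := ENNReal.rpow_arith_mean_le_arith_mean_rpow (Finset.insertNone s)
      (fun o => o.elim (1 - ∑ k ∈ s, w k) w) (fun o => o.elim 0 x)
      (by rw [Finset.sum_insertNone]
          simp only [Option.elim]
          exact tsub_add_cancel_of_le hs)
      (p := r) (by exact_mod_cast hr)
    simp only [Finset.sum_insertNone, Option.elim, mul_zero, zero_add, ENNReal.rpow_natCast,
      zero_pow (Nat.one_le_iff_ne_zero.mp hr)] at h
    exact h.trans (ENNReal.sum_le_tsum s)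
  have ht : Tendsto (fun s : Finset ℕ => (∑ k ∈ s, w k * x k) ^ r) atTop
      (nhds ((∑' k, w k * x k) ^ r)) :=
    ((ENNReal.continuous_pow r).tendsto _).comp ENNReal.summable.hasSum
  exact le_of_tendsto' ht hfin

lemma pastSigma_le {Ω : Type*} [mΩ : MeasurableSpace Ω] (Y : ℤ → Ω → ℕ)
    (hY : ∀ t, Measurable (Y t)) (t : ℤ) : pastSigma Y t ≤ mΩ :=
  iSup_le fun s => (hY s.1).comap_le

/-- The moments of `Y_t` are at most those of `λ_t + r`. -/
lemma lintegral_pow_le {Ω : Type*} [MeasurableSpace Ω] (μ : Measure Ω) [IsProbabilityMeasure μ]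
    (Y : ℤ → Ω → ℕ) (hY : ∀ t, Measurable (Y t)) (g : (ℕ → ℝ) → ℝ) (t : ℤ)
    (h : PoissonARAt μ Y g t) (r : ℕ) :
    ∫⁻ ω, (Y t ω : ℝ≥0∞) ^ r ∂μ ≤ ∫⁻ ω, (ENNReal.ofReal (g (past Y t ω)) + r) ^ r ∂μ := by
  have hm := pastSigma_le Y hY (t - 1)
  set q : ℕ → Ω → ℝ := fun n ω =>
    Real.exp (-(g (past Y t ω))) * (g (past Y t ω)) ^ n / (n.factorial : ℝ) with hq
  have hset : ∀ n, MeasurableSet {ω | Y t ω = n} := fun n => hY t (measurableSet_singleton n)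
  have hind : ∀ n, (fun ω => if Y t ω = n then (1 : ℝ) else 0)
      = {ω | Y t ω = n}.indicator 1 := by
    intro n; ext ω; simp [Set.indicator_apply]
  have hqint : ∀ n, Integrable (q n) μ := fun n => integrable_condExp.congr (h n)
  have hqnn : ∀ n, 0 ≤ᵐ[μ] q n := by
    intro n
    have h0 : 0 ≤ᵐ[μ] μ[(fun ω => if Y t ω = n then (1 : ℝ) else 0) | pastSigma Y (t - 1)] :=
      condExp_nonneg (Eventually.of_forall fun ω => by
        simp only [Pi.zero_apply]; split_ifs <;> norm_num)
    filter_upwards [h0, h n] with ω h1 h2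
    rw [h2] at h1
    exact h1
  have hprob : ∀ n, μ {ω | Y t ω = n} = ∫⁻ ω, ENNReal.ofReal (q n ω) ∂μ := by
    intro n
    rw [← ofReal_integral_eq_lintegral_ofReal (hqint n) (hqnn n), ← integral_congr_ae (h n),
      integral_condExp hm, hind, integral_indicator_one (hset n), ofReal_measureReal]
  have hsum : ∫⁻ ω, (Y t ω : ℝ≥0∞) ^ r ∂μ
      = ∑' n : ℕ, (n : ℝ≥0∞) ^ r * μ {ω | Y t ω = n} := by
    rw [← lintegral_map (f := fun n : ℕ => (n : ℝ≥0∞) ^ r) (measurable_of_countable _) (hY t),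
      lintegral_countable']
    refine tsum_congr fun n => ?_
    rw [Measure.map_apply (hY t) (measurableSet_singleton n)]
    rfl
  rw [hsum]
  simp_rw [hprob]
  calc ∑' n : ℕ, (n : ℝ≥0∞) ^ r * ∫⁻ ω, ENNReal.ofReal (q n ω) ∂μ
      = ∫⁻ ω, ∑' n : ℕ, (n : ℝ≥0∞) ^ r * ENNReal.ofReal (q n ω) ∂μ := by
        rw [lintegral_tsum fun n => ((hqint n).aemeasurable.ennreal_ofReal).const_mul _]
        refine tsum_congr fun n => ?_
        rw [lintegral_const_mul'' _ (hqint n).aemeasurable.ennreal_ofReal]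
    _ ≤ _ := by
        refine lintegral_mono_ae ?_
        filter_upwards [hqnn 1] with ω hω
        have hl : 0 ≤ g (past Y t ω) := by
          simp only [hq, Pi.zero_apply, pow_one, Nat.factorial_one, Nat.cast_one, div_one] at hω
          exact nonneg_of_mul_nonneg_right hω (Real.exp_pos _)
        simp only [hq]
        generalize g (past Y t ω) = l at hl
        have hnn : ∀ n : ℕ, 0 ≤ Real.exp (-l) * l ^ n / (n.factorial : ℝ) := fun n => by positivity
        refine poisson_moment_le _ _ ?_ ?_ r
        · have hs : HasSum (fun n : ℕ => Real.exp (-l) * l ^ n / (n.factorial : ℝ)) 1 := by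
            have := (NormedSpace.expSeries_div_hasSum_exp l).mul_left (Real.exp (-l))
            rw [← Real.exp_eq_exp_ℝ, ← Real.exp_add, neg_add_cancel, Real.exp_zero] at this
            simpa only [mul_div_assoc] using this
          rw [← ENNReal.ofReal_tsum_of_nonneg hnn hs.summable, hs.tsum_eq, ENNReal.ofReal_one]
        · intro n
          have : (n : ℝ≥0∞) + 1 = ENNReal.ofReal ((n : ℝ) + 1) := by
            rw [ENNReal.ofReal_add (by positivity) (by positivity)]; simp
          rw [this, ← ENNReal.ofReal_mul (by positivity), ← ENNReal.ofReal_mul hl]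
          congr 1
          rw [Nat.factorial_succ]
          push_cast
          field_simp
          ring

/-- Under A₀(Θ), if `Y` follows the Poisson autoregressive model with
parameter `θ*` after time `k*` and `E[Y_t^r] ≤ C_{r,0}` for all `t ≤ k*`, then there is a
constant `C > 0` with `E[Y_{k*+ℓ}^r] ≤ C` for all `ℓ ≥ 1`. -/
theorem moments_bounded_after_change {d : ℕ} {Ω : Type*} [MeasurableSpace Ω]
    (μ : Measure Ω) [IsProbabilityMeasure μ]
    (Θ : Set (Fin d → ℝ)) (f : (Fin d → ℝ) → (ℕ → ℝ) → ℝ) (α : ℕ → ℝ)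
    (Y : ℤ → Ω → ℕ) (hYmeas : ∀ t, Measurable (Y t))
    (kstar : ℤ) (θstar : Fin d → ℝ) (hθstar : θstar ∈ Θ)
    (hA0 : AssumptionA0 Θ f α)
    (hPAR : ∀ t : ℤ, kstar < t → PoissonARAt μ Y (f θstar) t)
    (r : ℕ) (hr : 1 ≤ r) (Cr0 : ℝ) (hCr0 : 0 < Cr0)
    (hmom : ∀ t : ℤ, t ≤ kstar → ∫⁻ ω, (Y t ω : ℝ≥0∞) ^ r ∂μ ≤ ENNReal.ofReal Cr0) :
    ∃ C : ℝ, 0 < C ∧ ∀ ℓ : ℕ, 1 ≤ ℓ →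
      ∫⁻ ω, (Y (kstar + ℓ) ω : ℝ≥0∞) ^ r ∂μ ≤ ENNReal.ofReal C := by
  obtain ⟨hα, hαs, hα1, -, hLip⟩ := hA0
  set a : ℝ := ∑' k : ℕ, α (k + 1) with ha
  have ha0 : 0 ≤ a := tsum_nonneg fun k => hα _
  have h1a : 0 < 1 - a := by linarith
  set M : ℝ := |f θstar (fun _ => 0)| with hM
  set D : ℝ := (M + r) / (1 - a) with hD
  have hM0 : 0 ≤ M := abs_nonneg _
  have hD0 : 0 ≤ D := by positivity
  -- Index `0` carries the constant `D` with the leftover weight `1 - a`; index `j + 1` is the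
  -- lag `j + 1`.
  set w : ℕ → ℝ≥0∞ := fun
    | 0 => ENNReal.ofReal (1 - a)
    | j + 1 => ENNReal.ofReal (α (j + 1)) with hw
  have hw1 : ∑' k, w k = 1 := by
    rw [tsum_eq_zero_add' ENNReal.summable]
    simp only [hw]
    rw [← ENNReal.ofReal_tsum_of_nonneg (fun k => hα _) ((summable_nat_add_iff 1).mpr hαs),
      ← ENNReal.ofReal_add h1a.le ha0]
    simp [ha]
  have key : ∀ n : ℕ, ∀ t : ℤ, t ≤ kstar + n →
      ∫⁻ ω, (Y t ω : ℝ≥0∞) ^ r ∂μ ≤ ENNReal.ofReal (max Cr0 (D ^ r)) := by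
    intro n
    induction n with
    | zero =>
      intro t ht
      exact (hmom t (by simpa using ht)).trans (ENNReal.ofReal_le_ofReal (le_max_left _ _))
    | succ n ih =>
      intro t ht
      rcases le_or_gt t kstar with hk | hk
      · exact ih t (by omega)
      set x : Ω → ℕ → ℝ≥0∞ := fun ω => fun
        | 0 => ENNReal.ofReal D
        | j + 1 => (Y (t - 1 - j) ω : ℝ≥0∞) with hx
      have hbound : ∀ ω, ENNReal.ofReal (f θstar (past Y t ω)) + r ≤ ∑' k, w k * x ω k := by
        intro ω
        have hL := hLip θstar hθstar (past Y t ω) (fun _ => 0)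
          (fun k => Nat.cast_nonneg _) (fun _ => le_rfl)
        have hterm : ∀ k : ℕ, ENNReal.ofReal (α (k + 1) * |past Y t ω k - 0|)
            = ENNReal.ofReal (α (k + 1)) * (Y (t - 1 - k) ω : ℝ≥0∞) := by
          intro k
          rw [ENNReal.ofReal_mul (hα _)]
          simp [past]
        simp_rw [hterm] at hL
        have hf : ENNReal.ofReal (f θstar (past Y t ω)) ≤ ENNReal.ofReal M
            + ENNReal.ofReal |f θstar (past Y t ω) - f θstar (fun _ => 0)| := by
          rw [← ENNReal.ofReal_add hM0 (abs_nonneg _)]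
          refine ENNReal.ofReal_le_ofReal ?_
          have h1 := le_abs_self (f θstar (past Y t ω) - f θstar (fun _ => 0))
          have h2 := le_abs_self (f θstar (fun _ => 0))
          linarith
        rw [tsum_eq_zero_add' ENNReal.summable]
        simp only [hw, hx]
        have hw0 : ENNReal.ofReal (1 - a) * ENNReal.ofReal D = ENNReal.ofReal M + r := by
          rw [← ENNReal.ofReal_mul h1a.le, hD, mul_div_cancel₀ _ h1a.ne',
            ENNReal.ofReal_add hM0 (Nat.cast_nonneg _), ENNReal.ofReal_natCast]
        rw [hw0, add_right_comm]
        gcongr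
        exact hf.trans (by gcongr)
      have hxm : ∀ k, Measurable fun ω => x ω k := by
        intro k
        cases k with
        | zero => exact measurable_const
        | succ j =>
          exact (measurable_of_countable (fun m : ℕ => (m : ℝ≥0∞))).comp (hYmeas (t - 1 - j))
      calc ∫⁻ ω, (Y t ω : ℝ≥0∞) ^ r ∂μ
          ≤ ∫⁻ ω, (ENNReal.ofReal (f θstar (past Y t ω)) + r) ^ r ∂μ :=
            lintegral_pow_le μ Y hYmeas _ t (hPAR t hk) r
        _ ≤ ∫⁻ ω, ∑' k, w k * x ω k ^ r ∂μ := lintegral_mono fun ω =>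
            (pow_le_pow_left' (hbound ω) r).trans (tsum_mul_pow_le w (x ω) hw1 hr)
        _ = ∑' k, w k * ∫⁻ ω, x ω k ^ r ∂μ := by
            rw [lintegral_tsum fun k => (((hxm k).pow_const r).const_mul _).aemeasurable]
            exact tsum_congr fun k => lintegral_const_mul _ ((hxm k).pow_const r)
        _ ≤ ∑' k, w k * ENNReal.ofReal (max Cr0 (D ^ r)) := by
            refine ENNReal.tsum_le_tsum fun k => mul_le_mul_right ?_ _
            cases k with
            | zero =>
              simp only [hx, lintegral_const, measure_univ, mul_one]
              rw [← ENNReal.ofReal_pow hD0]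
              exact ENNReal.ofReal_le_ofReal (le_max_right _ _)
            | succ j => exact ih (t - 1 - j) (by push_cast at ht; omega)
        _ = ENNReal.ofReal (max Cr0 (D ^ r)) := by
            rw [ENNReal.tsum_mul_right, hw1, one_mul]
  exact ⟨max Cr0 (D ^ r), lt_max_of_lt_left hCr0, fun ℓ _ => key ℓ _ le_rfl⟩

end
end

section
/- Let (α_k)_{k≥1} be nonnegative reals with α := Σ_{k≥1} α_k < 1 and let C > 0. Let (u_ℓ)_{ℓ∈ℤ} be nonnegative reals such that u_ℓ ≤ C for all ℓ ∈ ℤ and u_ℓ ≤ Σ_{k≥1} α_k u_{ℓ−k} for all integers ℓ ≥ 1. Then for every integer ℓ ≥ 1, u_ℓ ≤ C · inf_{1 ≤ p ≤ ℓ} ( α^{ℓ/p} + (1/(1−α)) Σ_{k≥p} α_k ), where the infimum is over integers p with 1 ≤ p ≤ ℓ. -/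
/-! With `a = ∑ α_k`, `T = ∑_{k ≥ p} α_k` and `S = T / (1 - a)`, strong induction on `n` gives
`u n ≤ C (a ^ (n / p) + S)` for every `n ≥ 0`. For `n ≥ 1` the recursion is split at lag `p`. Lags
at least `p` contribute at most `C T`, by the uniform bound on `u`. Lags `k < p` lead to indices
`n - k > n - p`, where the induction hypothesis (or `u ≤ C`, if the index is negative) bounds `u` by
`C (a ^ y + S)` with `y = max (n - p) 0 / p`; their total weight is at most `a`, and
`a * a ^ y ≤ a ^ (n / p)` because `n / p ≤ y + 1` (`mul_rpow_le_of_le_add_one`). The error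
terms close up since `a S + T = S`. -/

/-- Lowering the exponent raises a power with base in `[0, 1]`; stated without excluding `a = 0`,
where `a ^ (y + 1) = a * a ^ y` may fail. -/
lemma mul_rpow_le_of_le_add_one {a x y : ℝ} (ha : 0 ≤ a) (ha1 : a ≤ 1) (h : x ≤ y + 1) :
    a * a ^ y ≤ a ^ x := by
  rcases ha.eq_or_lt with rfl | hpos
  · rw [zero_mul]
    exact Real.rpow_nonneg le_rfl x
  · calc a * a ^ y = a ^ (y + 1) := by rw [Real.rpow_add_one hpos.ne', mul_comm]
      _ ≤ a ^ x := Real.rpow_le_rpow_of_exponent_ge hpos ha1 h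

/-- Let `(α_k)_{k≥1}` be nonnegative reals (here `α (k+1)` is `α_{k+1}`)
with `α := Σ_{k≥1} α_k < 1` and `C > 0`.  If `(u_ℓ)_{ℓ∈ℤ}` are nonnegative reals with
`u_ℓ ≤ C` for all `ℓ` and `u_ℓ ≤ Σ_{k≥1} α_k u_{ℓ−k}` for all `ℓ ≥ 1`, then for every
`ℓ ≥ 1` and every integer `1 ≤ p ≤ ℓ`,
`u_ℓ ≤ C (α^{ℓ/p} + (1/(1−α)) Σ_{k≥p} α_k)`
(equivalently, `u_ℓ` is bounded by `C` times the infimum over such `p`). -/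
theorem recursion_approximation_bound (α : ℕ → ℝ) (hα : ∀ k, 0 ≤ α k)
    (hsum : Summable α) (hlt : (∑' k : ℕ, α (k + 1)) < 1)
    (C : ℝ) (hC : 0 < C) (u : ℤ → ℝ) (hu0 : ∀ n, 0 ≤ u n) (huC : ∀ n, u n ≤ C)
    (hrec : ∀ ℓ : ℤ, 1 ≤ ℓ → u ℓ ≤ ∑' k : ℕ, α (k + 1) * u (ℓ - (k + 1))) :
    ∀ ℓ : ℕ, 1 ≤ ℓ → ∀ p : ℕ, 1 ≤ p → p ≤ ℓ →
      u ℓ ≤ C * ((∑' k : ℕ, α (k + 1)) ^ ((ℓ : ℝ) / p) +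
        (1 / (1 - ∑' k : ℕ, α (k + 1))) * ∑' k : ℕ, α (p + k)) := by
  intro ℓ hℓ p hp hpℓ
  clear hℓ hpℓ
  have hs1 : Summable fun k => α (k + 1) := (summable_nat_add_iff 1).2 hsum
  have hsp : Summable fun k => α (p + k) := by
    simpa only [add_comm] using (summable_nat_add_iff p).2 hsum
  set a := ∑' k : ℕ, α (k + 1) with ha
  set T := ∑' k : ℕ, α (p + k) with hT
  have ha0 : 0 ≤ a := tsum_nonneg fun k => hα _
  have hT0 : 0 ≤ T := tsum_nonneg fun k => hα _
  obtain ⟨S, hS⟩ : ∃ S, S = 1 / (1 - a) * T := ⟨_, rfl⟩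
  have h1a : 0 < 1 - a := by linarith
  have hS0 : 0 ≤ S := by rw [hS]; positivity
  have hST : a * S + T = S := by rw [hS]; field_simp; ring
  have hp0 : (0 : ℝ) < p := by exact_mod_cast hp
  rw [← hS]
  clear_value a T
  induction ℓ using Nat.strong_induction_on with
  | _ n ih =>
  rcases Nat.eq_zero_or_pos n with rfl | hn
  · have := huC ((0 : ℕ) : ℤ)
    simp only [Nat.cast_zero, zero_div, Real.rpow_zero] at this ⊢
    nlinarith [mul_nonneg hC.le hS0]
  -- The truncated subtraction makes `y = 0` when `n < p`, so that `a ^ y = 1` there.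
  obtain ⟨y, hy⟩ : ∃ y : ℝ, y = ((n - p : ℕ) : ℝ) / p := ⟨_, rfl⟩
  have hpow : a * a ^ y ≤ a ^ ((n : ℝ) / p) := by
    apply mul_rpow_le_of_le_add_one ha0 hlt.le
    rw [hy, div_add_one hp0.ne']
    gcongr
    exact_mod_cast (by omega : n ≤ n - p + p)
  have hD0 : 0 ≤ C * (a ^ y + S) := by positivity
  have hshort : ∀ k ∈ Finset.range (p - 1), u ((n : ℤ) - (k + 1)) ≤ C * (a ^ y + S) := by
    intro k hk
    rw [Finset.mem_range] at hk
    by_cases hkn : k + 1 ≤ n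
    · have hcast : (n : ℤ) - (k + 1) = ((n - (k + 1) : ℕ) : ℤ) := by omega
      rw [hcast]
      refine (ih (n - (k + 1)) (by omega)).trans ?_
      have hle : a ^ (((n - (k + 1) : ℕ) : ℝ) / p) ≤ a ^ y := by
        apply Real.rpow_le_rpow_of_exponent_ge' ha0 hlt.le
        · rw [hy]
          positivity
        · rw [hy]
          gcongr
          omega
      gcongr
    · have hy0 : y = 0 := by
        rw [hy, Nat.sub_eq_zero_of_le (by omega), Nat.cast_zero, zero_div]
      rw [hy0, Real.rpow_zero]
      nlinarith [huC ((n : ℤ) - (k + 1)), mul_nonneg hC.le hS0]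
  have hsf : Summable fun k : ℕ => α (k + 1) * u ((n : ℤ) - (k + 1)) :=
    (hs1.mul_right C).of_nonneg_of_le (fun k => mul_nonneg (hα _) (hu0 _))
      fun k => mul_le_mul_of_nonneg_left (huC _) (hα _)
  have hhead : ∑ k ∈ Finset.range (p - 1), α (k + 1) * u ((n : ℤ) - (k + 1))
      ≤ a * (C * (a ^ y + S)) := by
    calc _ ≤ ∑ k ∈ Finset.range (p - 1), α (k + 1) * (C * (a ^ y + S)) :=
          Finset.sum_le_sum fun k hk => mul_le_mul_of_nonneg_left (hshort k hk) (hα _)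
      _ = (∑ k ∈ Finset.range (p - 1), α (k + 1)) * (C * (a ^ y + S)) := by
          rw [Finset.sum_mul]
      _ ≤ _ := by
          refine mul_le_mul_of_nonneg_right ?_ hD0
          rw [ha]
          exact hs1.sum_le_tsum _ fun k _ => hα _
  have htail : ∑' k : ℕ, α (k + (p - 1) + 1) * u ((n : ℤ) - ((k + (p - 1) : ℕ) + 1))
      ≤ T * C := by
    rw [hT, ← tsum_mul_right]
    refine ((summable_nat_add_iff (p - 1)).2 hsf).tsum_le_tsum (fun k => ?_) (hsp.mul_right C)
    rw [show k + (p - 1) + 1 = p + k by omega]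
    exact mul_le_mul_of_nonneg_left (huC _) (hα _)
  calc u n ≤ ∑' k : ℕ, α (k + 1) * u ((n : ℤ) - (k + 1)) := hrec n (by exact_mod_cast hn)
    _ ≤ a * (C * (a ^ y + S)) + T * C := by
        rw [← hsf.sum_add_tsum_nat_add (p - 1)]
        exact add_le_add hhead htail
    _ = C * (a * a ^ y + (a * S + T)) := by ring
    _ ≤ C * (a ^ ((n : ℝ) / p) + S) := by
        rw [hST]
        gcongr
end

section
/- Let Θ ⊂ ℝ^d be compact, and let f satisfy D(Θ) and A_0(Θ) with α_j^{(0)} = O(j^{−γ}) for some γ > 3/2; write α^{(0)} := Σ_{j≥1} α_j^{(0)}. Let Y = (Y_t)_{t∈ℤ} and Ỹ = (Ỹ_t)_{t∈ℤ} be ℕ-valued processes on a common probability space with Ỹ strictly stationary, such that for every integer r ≥ 1, sup_{t∈ℤ} E[Y_t^r] < ∞ and E[Ỹ_0^r] < ∞, and suppose there is C > 0 such that E|Y_{k*+ℓ} − Ỹ_{k*+ℓ}| ≤ C · inf_{1 ≤ p ≤ ℓ} ( (α^{(0)})^{ℓ/p} + Σ_{k≥p} α_k^{(0)} ) for all integers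 ℓ ≥ 1. Then (1/n) sup_{θ∈Θ} | Σ_{t=k*+1}^{k*+n} ( ℓ̂_t(θ) − ℓ̃_t(θ) ) | → 0 almost surely as n → ∞, where ℓ̂_t(θ) = Y_t log λ̂_t(θ) − λ̂_t(θ) with λ̂_t(θ) = f_θ(Y_{t−1}, …, Y_{k*+1}, 0, 0, …), and ℓ̃_t(θ) = Ỹ_t log λ̃_t(θ) − λ̃_t(θ) with λ̃_t(θ) = f_θ(Ỹ_{t−1}, Ỹ_{t−2}, …). -/
/-!
Since `f_θ ≥ c` and `f_θ` is Lipschitz with weights `α` not depending on `θ`, the `t`-th difference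
`|ℓ̂_t(θ) − ℓ̃_t(θ)|` is bounded, uniformly in `θ`, by an `envelope` `X_n` (`t = kstar + n + 1`) built
from the gaps `|Y_s − Ỹ_s|` with `s > kstar` and from the values `Ỹ_s` with `s ≤ kstar`
(`ofReal_loglik_sub_le`). By Kronecker's lemma (`tendsto_average_of_summable`) it is enough that
`∑ X_n / (n + 1)` converges almost surely, hence enough that `∑ E[X_n] / (n + 1) < ∞`.

Choosing `p = ⌊√ℓ⌋` in the coupling bound gives `E|Y_{kstar+ℓ} − Ỹ_{kstar+ℓ}| = O(ℓ ^ (-1/4))`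
(`exists_coupling_rate`). The envelope involves products of gaps with `Y_t` or past values of `Ỹ`;
their means are `O(ℓ ^ (-1/8))` by Cauchy–Schwarz and the bounded third moments
(`lintegral_mul_gap_le`). So `E[X_n]` is at most a constant times
`(n+1) ^ (-1/8) + ∑_{k<n} α_{k+1} (n-k) ^ (-1/8) + ∑_{k≥n} α_{k+1}`, and this is summable against
`1/(n+1)` because `∑ α_j j ^ (1/2) < ∞` (`tsum_convolution_ne_top`).
-/

open MeasureTheory Filter
open scoped ENNReal NNReal

noncomputable section

/-- The past of `Y` at time `t` truncated at `k*`: `(Y_{t-1}, …, Y_{k*+1}, 0, 0, …)`. -/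
def pastTrunc {Ω : Type*} (Y : ℤ → Ω → ℕ) (kstar t : ℤ) (ω : Ω) : ℕ → ℝ :=
  fun k => if kstar < t - 1 - (k : ℤ) then (Y (t - 1 - k) ω : ℝ) else 0

/-- The shift on two-sided paths. -/
def shiftZ : (ℤ → ℕ) → (ℤ → ℕ) := fun x t => x (t + 1)

/-! ### Deterministic estimates -/

/-- The form of Kronecker's lemma needed here. The average is the series of the summable terms
`x i / (i + 1)` with weights `(i + 1) / n` for `i < n`; these are at most `1` and vanish as `n` grows. -/
theorem tendsto_average_of_summable {x : ℕ → ℝ} (hx : ∀ n, 0 ≤ x n)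
    (hs : Summable fun n : ℕ => x n / ((n : ℝ) + 1)) :
    Tendsto (fun n : ℕ => (1 / (n : ℝ)) * ∑ i ∈ Finset.range n, x i) atTop (nhds 0) := by
  have h := tendsto_tsum_of_dominated_convergence (𝓕 := atTop)
    (f := fun (n i : ℕ) => if i < n then (1 / (n : ℝ)) * x i else 0)
    (g := fun _ : ℕ => (0 : ℝ)) hs ?_ ?_
  · rw [tsum_zero] at h
    refine h.congr fun n => ?_
    rw [tsum_eq_sum (s := Finset.range n), Finset.mul_sum]
    · exact Finset.sum_congr rfl fun i hi => if_pos (Finset.mem_range.1 hi)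
    · intro i hi
      exact if_neg fun h => hi (Finset.mem_range.2 h)
  · intro i
    have : Tendsto (fun n : ℕ => (1 / (n : ℝ)) * x i) atTop (nhds 0) := by
      simpa using (tendsto_one_div_atTop_nhds_zero_nat (𝕜 := ℝ)).mul_const (x i)
    refine this.congr' ?_
    filter_upwards [eventually_gt_atTop i] with n hn
    rw [if_pos hn]
  · refine Eventually.of_forall fun n i => ?_
    have hi : (0 : ℝ) < (i : ℝ) + 1 := by positivity
    split_ifs with hin
    · have hle : (i : ℝ) + 1 ≤ n := by exact_mod_cast hin
      rw [Real.norm_of_nonneg (mul_nonneg (by positivity) (hx i)), one_div, inv_mul_eq_div]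
      exact div_le_div_of_nonneg_left (hx i) hi hle
    · rw [norm_zero]
      exact div_nonneg (hx i) hi.le

/-- The decay exponent `γ > 3/2` enters the proof only through this half-power moment of `α`. -/
theorem summable_mul_sqrt_of_decay {α : ℕ → ℝ} (hα : ∀ k, 0 ≤ α k) {γ K : ℝ} (hγ : 3 / 2 < γ)
    (hdecay : ∀ j : ℕ, 1 ≤ j → α j ≤ K * (j : ℝ) ^ (-γ)) :
    Summable fun j : ℕ => α (j + 1) * ((j + 1 : ℕ) : ℝ) ^ (1 / 2 : ℝ) := by
  have h1 : Summable fun j : ℕ => K * ((j + 1 : ℕ) : ℝ) ^ (-γ + 1 / 2) :=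
    (((summable_nat_add_iff 1).2 (Real.summable_nat_rpow.2 (by linarith)))).mul_left K
  refine h1.of_nonneg_of_le (fun j => mul_nonneg (hα _) (by positivity)) fun j => ?_
  rw [Real.rpow_add (by positivity), ← mul_assoc]
  exact mul_le_mul_of_nonneg_right (hdecay _ (by omega)) (by positivity)

/-- Markov-type bound: each term of the tail from `p` on carries a factor `j ^ (1/2) ≥ p ^ (1/2)`. -/
theorem tsum_tail_le {α : ℕ → ℝ} (hα : ∀ k, 0 ≤ α k)
    (hs : Summable fun j : ℕ => α (j + 1) * ((j + 1 : ℕ) : ℝ) ^ (1 / 2 : ℝ))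
    {p : ℕ} (hp : 1 ≤ p) :
    ∑' k : ℕ, α (p + k) ≤
      (∑' j : ℕ, α (j + 1) * ((j + 1 : ℕ) : ℝ) ^ (1 / 2 : ℝ)) * (p : ℝ) ^ (-(1 / 2) : ℝ) := by
  obtain ⟨q, rfl⟩ : ∃ q, p = q + 1 := ⟨p - 1, by omega⟩
  set g : ℕ → ℝ := fun j => α (j + 1) * ((j + 1 : ℕ) : ℝ) ^ (1 / 2 : ℝ) with hg
  have hg0 : ∀ j, 0 ≤ g j := fun j => mul_nonneg (hα _) (by positivity)
  have hgs : Summable fun k => g (k + q) := (summable_nat_add_iff q).2 hs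
  have htail : ∑' k, g (k + q) ≤ ∑' j, g j := by
    rw [← hs.sum_add_tsum_nat_add q]
    exact le_add_of_nonneg_left (Finset.sum_nonneg fun i _ => hg0 i)
  have hterm : ∀ k, α (q + 1 + k) ≤ g (k + q) * ((q + 1 : ℕ) : ℝ) ^ (-(1 / 2) : ℝ) := by
    intro k
    have h1 : ((q + 1 : ℕ) : ℝ) ^ (1 / 2 : ℝ) ≤ ((k + q + 1 : ℕ) : ℝ) ^ (1 / 2 : ℝ) :=
      Real.rpow_le_rpow (by positivity) (by push_cast; linarith [(Nat.cast_nonneg k : (0 : ℝ) ≤ k)])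
        (by norm_num)
    have h2 : (0 : ℝ) < ((q + 1 : ℕ) : ℝ) ^ (1 / 2 : ℝ) := by positivity
    rw [Real.rpow_neg (by positivity), ← div_eq_mul_inv, le_div_iff₀ h2, hg]
    have : q + 1 + k = k + q + 1 := by omega
    rw [this]
    exact mul_le_mul_of_nonneg_left h1 (hα _)
  have hsum2 := hgs.mul_right (((q + 1 : ℕ) : ℝ) ^ (-(1 / 2) : ℝ))
  calc ∑' k, α (q + 1 + k) ≤ ∑' k, g (k + q) * ((q + 1 : ℕ) : ℝ) ^ (-(1 / 2) : ℝ) :=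
        (hsum2.of_nonneg_of_le (fun k => hα _) hterm).tsum_le_tsum hterm hsum2
    _ = (∑' k, g (k + q)) * ((q + 1 : ℕ) : ℝ) ^ (-(1 / 2) : ℝ) := tsum_mul_right
    _ ≤ _ := mul_le_mul_of_nonneg_right htail (by positivity)

theorem exists_pow_le_rpow {a : ℝ} (ha0 : 0 ≤ a) (ha1 : a < 1) :
    ∃ M : ℝ, 0 ≤ M ∧ ∀ p : ℕ, 1 ≤ p → a ^ p ≤ M * (p : ℝ) ^ (-(1 / 2) : ℝ) := by
  obtain ⟨M, hM⟩ := (tendsto_self_mul_const_pow_of_lt_one ha0 ha1).bddAbove_range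
  have hM' : ∀ p : ℕ, (p : ℝ) * a ^ p ≤ M := fun p => hM ⟨p, rfl⟩
  refine ⟨M, by simpa using hM' 0, fun p hp => ?_⟩
  have hp' : (1 : ℝ) ≤ p := by exact_mod_cast hp
  have h1 : (p : ℝ) ^ (1 / 2 : ℝ) ≤ p := by
    simpa using Real.rpow_le_rpow_of_exponent_le hp' (show (1 / 2 : ℝ) ≤ 1 by norm_num)
  rw [Real.rpow_neg (by positivity), ← div_eq_mul_inv, le_div_iff₀ (by positivity), mul_comm]
  exact (mul_le_mul_of_nonneg_right h1 (by positivity)).trans (hM' p)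

theorem sqrt_rpow_le {l : ℕ} (hl : 1 ≤ l) :
    ((Nat.sqrt l : ℕ) : ℝ) ^ (-(1 / 2) : ℝ) ≤ 2 * (l : ℝ) ^ (-(1 / 4) : ℝ) := by
  set p := Nat.sqrt l with hp
  have hp1 : 1 ≤ p := Nat.le_sqrt.2 (by omega)
  have h4 : l ≤ 4 * (p * p) := by
    have h := Nat.lt_succ_sqrt l
    rw [← hp] at h
    nlinarith [h]
  have hpp : (0 : ℝ) < p := by exact_mod_cast hp1
  have hlp : (0 : ℝ) < l := by exact_mod_cast hl
  have h5 : (l : ℝ) ≤ 4 * ((p : ℝ) ^ (2 : ℝ)) := by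
    rw [Real.rpow_two, pow_two]; exact_mod_cast h4
  have h6 := Real.rpow_le_rpow_of_nonpos hlp h5 (show (-(1 / 4) : ℝ) ≤ 0 by norm_num)
  rw [Real.mul_rpow (by norm_num) (by positivity), ← Real.rpow_mul hpp.le] at h6
  have h7 : (1 / 2 : ℝ) ≤ (4 : ℝ) ^ (-(1 / 4) : ℝ) := by
    have h8 := Real.rpow_le_rpow_of_exponent_le (show (1 : ℝ) ≤ 4 by norm_num)
      (show (-(1 / 2) : ℝ) ≤ -(1 / 4) by norm_num)
    refine le_trans (le_of_eq ?_) h8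
    rw [show (4 : ℝ) = 2 ^ (2 : ℝ) by norm_num, ← Real.rpow_mul (by norm_num)]
    norm_num [Real.rpow_neg_one]
  have h9 : (2 : ℝ) * -(1 / 4) = -(1 / 2) := by norm_num
  rw [h9] at h6
  have h10 : (0 : ℝ) < (p : ℝ) ^ (-(1 / 2) : ℝ) := by positivity
  nlinarith

/-- The coupling bound decays polynomially in `l`: with `p = ⌊√l⌋` one has `l / p ≥ p`, so the
geometric term is at most `(∑ α) ^ p`, and both terms are `O(p ^ (-1/2)) = O(l ^ (-1/4))`. -/
theorem exists_coupling_rate {α : ℕ → ℝ} (hα : ∀ k, 0 ≤ α k)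
    (hαlt : (∑' k : ℕ, α (k + 1)) < 1)
    (hs : Summable fun j : ℕ => α (j + 1) * ((j + 1 : ℕ) : ℝ) ^ (1 / 2 : ℝ))
    {C : ℝ} (hC : 0 < C) :
    ∃ R : ℝ, 0 ≤ R ∧ ∀ l : ℕ, 1 ≤ l → ∃ p : ℕ, 1 ≤ p ∧ p ≤ l ∧
      C * ((∑' k : ℕ, α (k + 1)) ^ ((l : ℝ) / p) + ∑' k : ℕ, α (p + k)) ≤
        R * (l : ℝ) ^ (-(1 / 4) : ℝ) := by
  have ha0 : 0 ≤ ∑' k : ℕ, α (k + 1) := tsum_nonneg fun k => hα _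
  obtain ⟨M, hM0, hM⟩ := exists_pow_le_rpow ha0 hαlt
  set A := ∑' j : ℕ, α (j + 1) * ((j + 1 : ℕ) : ℝ) ^ (1 / 2 : ℝ) with hA
  have hA0 : 0 ≤ A := tsum_nonneg fun k => mul_nonneg (hα _) (by positivity)
  refine ⟨C * (M + A) * 2, by positivity, fun l hl => ?_⟩
  have hp1 : 1 ≤ Nat.sqrt l := Nat.le_sqrt.2 (by omega)
  refine ⟨Nat.sqrt l, hp1, Nat.sqrt_le_self l, ?_⟩
  have hpp : (0 : ℝ) < (Nat.sqrt l : ℕ) := by exact_mod_cast hp1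
  have hexp : ((Nat.sqrt l : ℕ) : ℝ) ≤ (l : ℝ) / (Nat.sqrt l : ℕ) := by
    rw [le_div_iff₀ hpp]; exact_mod_cast Nat.sqrt_le l
  have h1 : (∑' k : ℕ, α (k + 1)) ^ ((l : ℝ) / (Nat.sqrt l : ℕ)) ≤
      M * ((Nat.sqrt l : ℕ) : ℝ) ^ (-(1 / 2) : ℝ) := by
    refine le_trans (Real.rpow_le_rpow_of_exponent_ge' ha0 hαlt.le hpp.le hexp) ?_
    rw [Real.rpow_natCast]
    exact hM _ hp1
  have h2 := tsum_tail_le hα hs hp1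
  calc _ ≤ C * ((M + A) * ((Nat.sqrt l : ℕ) : ℝ) ^ (-(1 / 2) : ℝ)) := by
        refine mul_le_mul_of_nonneg_left ?_ hC.le
        rw [add_mul]; exact add_le_add h1 h2
    _ ≤ C * ((M + A) * (2 * (l : ℝ) ^ (-(1 / 4) : ℝ))) := by
        gcongr; exact sqrt_rpow_le hl
    _ = _ := by ring

/-- Lipschitz-type bound for one summand of the log-likelihood: `log` is `1/c`-Lipschitz on
`[c, ∞)`, and `|log x| ≤ |log c| + x` there. -/
theorem abs_loglik_sub_le {c x x' y y' : ℝ} (hc : 0 < c) (hx : c ≤ x) (hx' : c ≤ x')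
    (hy : 0 ≤ y) :
    |(y * Real.log x' - x') - (y' * Real.log x - x)| ≤
      |y - y'| * (|Real.log c| + x) + (y * (1 / c) + 1) * |x' - x| := by
  have h0 : 0 < x := hc.trans_le hx
  have h0' : 0 < x' := hc.trans_le hx'
  have key : ∀ u v : ℝ, c ≤ u → c ≤ v → Real.log u - Real.log v ≤ (1 / c) * |u - v| := by
    intro u v hu hv
    have hv0 := hc.trans_le hv
    have hu0 := hc.trans_le hu
    rw [← Real.log_div hu0.ne' hv0.ne']
    calc Real.log (u / v) ≤ u / v - 1 := Real.log_le_sub_one_of_pos (by positivity)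
      _ = (1 / v) * (u - v) := by field_simp
      _ ≤ (1 / v) * |u - v| := by gcongr; exact le_abs_self _
      _ ≤ (1 / c) * |u - v| := by gcongr
  have hlog : |Real.log x' - Real.log x| ≤ (1 / c) * |x' - x| := by
    rw [abs_le']
    refine ⟨key _ _ hx' hx, ?_⟩
    rw [neg_sub, abs_sub_comm]; exact key _ _ hx hx'
  have hlogx : |Real.log x| ≤ |Real.log c| + x := by
    rw [abs_le']
    constructor
    · linarith [Real.log_le_sub_one_of_pos h0, abs_nonneg (Real.log c)]
    · linarith [Real.log_le_log hc hx, neg_abs_le (Real.log c)]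
  have hid : (y * Real.log x' - x') - (y' * Real.log x - x) =
      (y - y') * Real.log x + (y * (Real.log x' - Real.log x) - (x' - x)) := by ring
  rw [hid]
  refine (abs_add_le _ _).trans (add_le_add ?_ ?_)
  · rw [abs_mul]; gcongr
  · refine (abs_sub _ _).trans ?_
    rw [abs_mul, abs_of_nonneg hy]
    nlinarith [mul_le_mul_of_nonneg_left hlog hy]

/-! ### The processes: moments, gaps and the envelope -/

/-- `|Y_t − Ỹ_t|` as an extended nonnegative real. -/
def gap {Ω : Type*} (Y Ytil : ℤ → Ω → ℕ) (t : ℤ) (ω : Ω) : ℝ≥0∞ :=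
  ENNReal.ofReal |(Y t ω : ℝ) - (Ytil t ω : ℝ)|

/-- The `k`-th coordinate of `|pastTrunc Y − past Ỹ|` at time `kstar + n + 1`: a gap between the two
processes as long as the coordinate lies after `kstar`, and the value of `Ỹ` alone beyond. -/
def pastGap {Ω : Type*} (Y Ytil : ℤ → Ω → ℕ) (kstar : ℤ) (n k : ℕ) (ω : Ω) : ℝ≥0∞ :=
  if k < n then gap Y Ytil (kstar + (n - k : ℕ)) ω
  else (Ytil (kstar + (n + 1 : ℕ) - 1 - k) ω : ℝ≥0∞)

/-- A bound for `|ℓ̂_t(θ) − ℓ̃_t(θ)|` at `t = kstar + n + 1` that does not depend on `θ`, with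
`a k = α (k + 1)`, `L` bounding `|log c| + f_θ(0)` and `c' = 1 / c`. It takes values in `[0, ∞]`, so
convergence of the two series need not be known in advance. -/
def envelope {Ω : Type*} (Y Ytil : ℤ → Ω → ℕ) (kstar : ℤ) (a : ℕ → ℝ≥0∞) (L c' : ℝ≥0∞)
    (n : ℕ) (ω : Ω) : ℝ≥0∞ :=
  gap Y Ytil (kstar + (n + 1 : ℕ)) ω *
      (L + ∑' k : ℕ, a k * (Ytil (kstar + (n + 1 : ℕ) - 1 - k) ω : ℝ≥0∞)) +
    ((Y (kstar + (n + 1 : ℕ)) ω : ℝ≥0∞) * c' + 1) *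
      ∑' k : ℕ, a k * pastGap Y Ytil kstar n k ω

theorem lintegral_stationary {Ω : Type*} [MeasurableSpace Ω] {μ : Measure Ω}
    {Ytil : ℤ → Ω → ℕ} (hm : ∀ t, Measurable (Ytil t))
    (hstat : MeasurePreserving shiftZ (Measure.map (fun ω (t : ℤ) => Ytil t ω) μ)
      (Measure.map (fun ω (t : ℤ) => Ytil t ω) μ)) (r : ℕ) (t : ℤ) :
    ∫⁻ ω, (Ytil t ω : ℝ≥0∞) ^ r ∂μ = ∫⁻ ω, (Ytil 0 ω : ℝ≥0∞) ^ r ∂μ := by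
  have hpath : Measurable fun ω (t : ℤ) => Ytil t ω := measurable_pi_lambda _ hm
  have hcoord : ∀ t : ℤ, Measurable fun x : ℤ → ℕ => (x t : ℝ≥0∞) ^ r := fun t =>
    (measurable_from_nat (f := fun m : ℕ => (m : ℝ≥0∞) ^ r)).comp (measurable_pi_apply t)
  have hstep : ∀ t : ℤ, ∫⁻ ω, (Ytil (t + 1) ω : ℝ≥0∞) ^ r ∂μ =
      ∫⁻ ω, (Ytil t ω : ℝ≥0∞) ^ r ∂μ := by
    intro t
    have h := hstat.lintegral_comp (hcoord t)
    rw [lintegral_map (hcoord t) hpath] at h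
    rw [← h]
    exact (lintegral_map ((hcoord t).comp hstat.measurable) hpath).symm
  induction t using Int.induction_on with
  | zero => rfl
  | succ i ih => rw [hstep, ih]
  | pred i ih => rw [← ih, ← hstep (-(i : ℤ) - 1), sub_add_cancel]

/-- Integrality is used here: `z * u ≤ z ^ 3 + u ^ 3` holds for natural numbers. -/
theorem lintegral_mul_le_of_cube {Ω : Type*} [MeasurableSpace Ω] {μ : Measure Ω}
    {Z U : Ω → ℕ} (hZ : Measurable Z) {B : ℝ≥0∞}
    (hZB : ∫⁻ ω, (Z ω : ℝ≥0∞) ^ 3 ∂μ ≤ B) (hUB : ∫⁻ ω, (U ω : ℝ≥0∞) ^ 3 ∂μ ≤ B) :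
    ∫⁻ ω, (Z ω : ℝ≥0∞) * (U ω : ℝ≥0∞) ∂μ ≤ 2 * B := by
  have hnat : ∀ z u : ℕ, z * u ≤ z ^ 3 + u ^ 3 := by
    intro z u
    have hle : ∀ x : ℕ, x * x ≤ x ^ 3 := by
      intro x
      rw [← pow_two]
      rcases Nat.eq_zero_or_pos x with rfl | hx
      · simp
      · exact Nat.pow_le_pow_right hx (by norm_num)
    rcases le_total z u with h | h
    · exact (Nat.mul_le_mul_right _ h).trans ((hle u).trans (Nat.le_add_left _ _))
    · exact (Nat.mul_le_mul_left _ h).trans ((hle z).trans (Nat.le_add_right _ _))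
  calc _ ≤ ∫⁻ ω, ((Z ω : ℝ≥0∞) ^ 3 + (U ω : ℝ≥0∞) ^ 3) ∂μ :=
        lintegral_mono fun ω => by
          have h : ((Z ω * U ω : ℕ) : ℝ≥0∞) ≤ ((Z ω ^ 3 + U ω ^ 3 : ℕ) : ℝ≥0∞) :=
            Nat.cast_le.2 (hnat (Z ω) (U ω))
          simpa only [Nat.cast_mul, Nat.cast_add, Nat.cast_pow] using h
    _ = ∫⁻ ω, (Z ω : ℝ≥0∞) ^ 3 ∂μ + ∫⁻ ω, (U ω : ℝ≥0∞) ^ 3 ∂μ :=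
        lintegral_add_left ((measurable_from_nat (f := fun m : ℕ => (m : ℝ≥0∞) ^ 3)).comp hZ) _
    _ ≤ B + B := add_le_add hZB hUB
    _ = 2 * B := (two_mul B).symm

/-- A product with a gap costs only a square root of the expected gap: Cauchy–Schwarz applied to
`Z * D = (Z * √D) * √D`, where `D = |U − V|` and `E[Z² D]` is controlled by third moments. -/
theorem lintegral_mul_gap_le {Ω : Type*} [MeasurableSpace Ω] {μ : Measure Ω}
    {Z U V : Ω → ℕ} (hZ : Measurable Z) (hU : Measurable U) (hV : Measurable V) {B : ℝ≥0∞}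
    (hZB : ∫⁻ ω, (Z ω : ℝ≥0∞) ^ 3 ∂μ ≤ B) (hUB : ∫⁻ ω, (U ω : ℝ≥0∞) ^ 3 ∂μ ≤ B)
    (hVB : ∫⁻ ω, (V ω : ℝ≥0∞) ^ 3 ∂μ ≤ B) :
    ∫⁻ ω, (Z ω : ℝ≥0∞) * ENNReal.ofReal |(U ω : ℝ) - (V ω : ℝ)| ∂μ ≤
      (4 * B) ^ (1 / 2 : ℝ) *
        (∫⁻ ω, ENNReal.ofReal |(U ω : ℝ) - (V ω : ℝ)| ∂μ) ^ (1 / 2 : ℝ) := by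
  set D : Ω → ℝ≥0∞ := fun ω => ENNReal.ofReal |(U ω : ℝ) - (V ω : ℝ)| with hD
  have hcast : Measurable fun m : ℕ => (m : ℝ) := measurable_from_nat
  have hDm : Measurable D :=
    ENNReal.measurable_ofReal.comp (((hcast.comp hU).sub (hcast.comp hV)).abs)
  have hcube : Measurable fun m : ℕ => (m : ℝ≥0∞) ^ 3 := measurable_from_nat
  have hZm : Measurable fun ω => (Z ω : ℝ≥0∞) :=
    (measurable_from_nat (f := fun m : ℕ => (m : ℝ≥0∞))).comp hZ
  have hDle : ∀ ω, D ω ≤ ((U ω + V ω : ℕ) : ℝ≥0∞) := by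
    intro ω
    rw [← ENNReal.ofReal_natCast]
    refine ENNReal.ofReal_le_ofReal ?_
    push_cast
    rw [abs_le]
    constructor <;> linarith [(Nat.cast_nonneg (U ω) : (0 : ℝ) ≤ U ω),
      (Nat.cast_nonneg (V ω) : (0 : ℝ) ≤ V ω)]
  have hnat : ∀ z u : ℕ, z ^ 2 * u ≤ z ^ 3 + u ^ 3 := by
    intro z u
    rcases le_total z u with h | h
    · calc z ^ 2 * u ≤ u ^ 2 * u := by gcongr
        _ = u ^ 3 := by ring
        _ ≤ _ := Nat.le_add_left _ _
    · calc z ^ 2 * u ≤ z ^ 2 * z := by gcongr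
        _ = z ^ 3 := by ring
        _ ≤ _ := Nat.le_add_right _ _
  have hsq : ∀ x : ℝ≥0∞, (x ^ (1 / 2 : ℝ)) ^ (2 : ℝ) = x := by
    intro x
    rw [← ENNReal.rpow_mul]; norm_num
  have hmom : ∫⁻ ω, (Z ω : ℝ≥0∞) ^ 2 * D ω ∂μ ≤ 4 * B := by
    calc _ ≤ ∫⁻ ω, (((Z ω : ℝ≥0∞) ^ 3 + (U ω : ℝ≥0∞) ^ 3) +
            ((Z ω : ℝ≥0∞) ^ 3 + (V ω : ℝ≥0∞) ^ 3)) ∂μ := by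
          refine lintegral_mono fun ω => (mul_le_mul_right (hDle ω) _).trans ?_
          have h := add_le_add (hnat (Z ω) (U ω)) (hnat (Z ω) (V ω))
          rw [← mul_add] at h
          exact_mod_cast h
      _ = (∫⁻ ω, (Z ω : ℝ≥0∞) ^ 3 ∂μ + ∫⁻ ω, (U ω : ℝ≥0∞) ^ 3 ∂μ) +
            (∫⁻ ω, (Z ω : ℝ≥0∞) ^ 3 ∂μ + ∫⁻ ω, (V ω : ℝ≥0∞) ^ 3 ∂μ) := by
          have hZ3 : Measurable fun ω => (Z ω : ℝ≥0∞) ^ 3 := hcube.comp hZ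
          have hU3 : Measurable fun ω => (U ω : ℝ≥0∞) ^ 3 := hcube.comp hU
          have hZU : Measurable fun ω => (Z ω : ℝ≥0∞) ^ 3 + (U ω : ℝ≥0∞) ^ 3 := hZ3.add hU3
          rw [lintegral_add_left hZU, lintegral_add_left hZ3, lintegral_add_left hZ3]
      _ ≤ (B + B) + (B + B) := by gcongr
      _ = 4 * B := by ring
  have hH := ENNReal.lintegral_mul_le_Lp_mul_Lq μ Real.HolderConjugate.two_two
    (f := fun ω => (Z ω : ℝ≥0∞) * D ω ^ (1 / 2 : ℝ)) (g := fun ω => D ω ^ (1 / 2 : ℝ))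
    (hZm.mul (hDm.pow_const _)).aemeasurable (hDm.pow_const _).aemeasurable
  simp only [Pi.mul_apply, ENNReal.mul_rpow_of_nonneg _ _ (show (0 : ℝ) ≤ 2 by norm_num), hsq]
    at hH
  have hleft : ∀ ω, (Z ω : ℝ≥0∞) * D ω ^ (1 / 2 : ℝ) * D ω ^ (1 / 2 : ℝ) = Z ω * D ω := by
    intro ω
    rw [mul_assoc, ← ENNReal.rpow_add_of_nonneg _ _ (by norm_num) (by norm_num)]
    norm_num
  simp only [hleft, ENNReal.rpow_two] at hH
  refine hH.trans ?_
  gcongr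

/-- The bound of a log-likelihood summand by the envelope, for every `θ ∈ Θ` and every `ω`. -/
theorem ofReal_loglik_sub_le {d : ℕ} {Ω : Type*}
    {Θ : Set (Fin d → ℝ)} {f : (Fin d → ℝ) → (ℕ → ℝ) → ℝ}
    {c : ℝ} (hc : 0 < c) (hD : ∀ θ ∈ Θ, ∀ y : ℕ → ℝ, (∀ k, 0 ≤ y k) → c ≤ f θ y)
    {α : ℕ → ℝ} (hα : ∀ k, 0 ≤ α k)
    {M : ℝ} (hM : ∀ θ ∈ Θ, f θ (fun _ => 0) ≤ M)
    (hlip : ∀ θ ∈ Θ, ∀ y y' : ℕ → ℝ, (∀ k, 0 ≤ y k) → (∀ k, 0 ≤ y' k) →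
      ENNReal.ofReal |f θ y - f θ y'| ≤ ∑' k : ℕ, ENNReal.ofReal (α (k + 1) * |y k - y' k|))
    (kstar : ℤ) (Y Ytil : ℤ → Ω → ℕ) {θ : Fin d → ℝ} (hθ : θ ∈ Θ) (n : ℕ) (ω : Ω) {t : ℤ}
    (ht : t = kstar + (n + 1 : ℕ)) :
    ENNReal.ofReal
      |((Y t ω : ℝ) * Real.log (f θ (pastTrunc Y kstar t ω)) - f θ (pastTrunc Y kstar t ω)) -
        ((Ytil t ω : ℝ) * Real.log (f θ (past Ytil t ω)) - f θ (past Ytil t ω))| ≤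
      envelope Y Ytil kstar (fun k => ENNReal.ofReal (α (k + 1)))
        (ENNReal.ofReal (|Real.log c| + M)) (ENNReal.ofReal (1 / c)) n ω := by
  have hpast : ∀ k, 0 ≤ past Ytil t ω k := fun k => Nat.cast_nonneg _
  have htrunc : ∀ k, 0 ≤ pastTrunc Y kstar t ω k := by
    intro k
    unfold pastTrunc
    split_ifs
    · exact Nat.cast_nonneg _
    · exact le_rfl
  have hx := hD θ hθ _ hpast
  have hx' := hD θ hθ _ htrunc
  have hM0 : 0 < M := (hc.trans_le (hD θ hθ _ fun _ => le_rfl)).trans_le (hM θ hθ)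
  have h1c : 0 ≤ 1 / c := by positivity
  have hbig : ENNReal.ofReal (f θ (past Ytil t ω)) ≤ ENNReal.ofReal M +
      ∑' k : ℕ, ENNReal.ofReal (α (k + 1)) * (Ytil (t - 1 - k) ω : ℝ≥0∞) := by
    have h := hlip θ hθ (past Ytil t ω) (fun _ => 0) hpast (fun _ => le_rfl)
    have h2 : f θ (past Ytil t ω) ≤ M + |f θ (past Ytil t ω) - f θ (fun _ => 0)| := by
      linarith [le_abs_self (f θ (past Ytil t ω) - f θ (fun _ => 0)), hM θ hθ]
    refine (ENNReal.ofReal_le_ofReal h2).trans ?_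
    rw [ENNReal.ofReal_add hM0.le (abs_nonneg _)]
    gcongr
    refine h.trans (le_of_eq (tsum_congr fun k => ?_))
    rw [ENNReal.ofReal_mul (hα _), sub_zero, abs_of_nonneg (hpast k)]
    simp only [past, ENNReal.ofReal_natCast]
  have hdiff : ENNReal.ofReal |f θ (pastTrunc Y kstar t ω) - f θ (past Ytil t ω)| ≤
      ∑' k : ℕ, ENNReal.ofReal (α (k + 1)) * pastGap Y Ytil kstar n k ω := by
    refine (hlip θ hθ _ _ htrunc hpast).trans (le_of_eq (tsum_congr fun k => ?_))
    rw [ENNReal.ofReal_mul (hα _)]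
    congr 1
    unfold pastGap pastTrunc past gap
    by_cases hk : k < n
    · have h1 : kstar < t - 1 - (k : ℤ) := by omega
      have h2 : t - 1 - (k : ℤ) = kstar + (n - k : ℕ) := by omega
      rw [if_pos hk, if_pos h1, h2]
    · have h1 : ¬ kstar < t - 1 - (k : ℤ) := by omega
      rw [if_neg hk, if_neg h1, zero_sub, abs_neg, abs_of_nonneg (Nat.cast_nonneg _),
        ENNReal.ofReal_natCast, ht]
  refine (ENNReal.ofReal_le_ofReal
    (abs_loglik_sub_le hc hx hx' (Nat.cast_nonneg (Y t ω)))).trans ?_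
  have hxx := hc.le.trans hx
  rw [ENNReal.ofReal_add (by positivity) (by positivity), ENNReal.ofReal_mul (abs_nonneg _),
    ENNReal.ofReal_mul (by positivity), ENNReal.ofReal_add (abs_nonneg _) hxx,
    ENNReal.ofReal_add (by positivity) zero_le_one, ENNReal.ofReal_mul (Nat.cast_nonneg _),
    ENNReal.ofReal_natCast, ENNReal.ofReal_one]
  unfold envelope gap
  rw [ENNReal.ofReal_add (abs_nonneg _) hM0.le, add_assoc, ← ht]
  gcongr

theorem lintegral_tsum_mul_le {Ω : Type*} [MeasurableSpace Ω] {μ : Measure Ω}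
    (a : ℕ → ℝ≥0∞) {F : ℕ → Ω → ℝ≥0∞} (hF : ∀ k, Measurable (F k)) {w : ℕ → ℝ≥0∞}
    (hw : ∀ k, ∫⁻ ω, F k ω ∂μ ≤ w k) :
    ∫⁻ ω, ∑' k, a k * F k ω ∂μ ≤ ∑' k, a k * w k := by
  rw [lintegral_tsum fun k => ((hF k).const_mul _).aemeasurable]
  refine ENNReal.tsum_le_tsum fun k => ?_
  rw [lintegral_const_mul _ (hF k)]
  gcongr
  exact hw k

theorem measurable_gap {Ω : Type*} [MeasurableSpace Ω] {Y Ytil : ℤ → Ω → ℕ}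
    (hY : ∀ t, Measurable (Y t)) (hYt : ∀ t, Measurable (Ytil t)) (t : ℤ) :
    Measurable (gap Y Ytil t) := by
  have hcast : Measurable fun m : ℕ => (m : ℝ) := measurable_from_nat
  exact ENNReal.measurable_ofReal.comp (((hcast.comp (hY t)).sub (hcast.comp (hYt t))).abs)

theorem measurable_natCast_ennreal {Ω : Type*} [MeasurableSpace Ω] {Z : Ω → ℕ}
    (hZ : Measurable Z) : Measurable fun ω => (Z ω : ℝ≥0∞) :=
  (measurable_from_nat (f := fun m : ℕ => (m : ℝ≥0∞))).comp hZ

theorem measurable_pastGap {Ω : Type*} [MeasurableSpace Ω] {Y Ytil : ℤ → Ω → ℕ}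
    (hY : ∀ t, Measurable (Y t)) (hYt : ∀ t, Measurable (Ytil t)) (kstar : ℤ) (n k : ℕ) :
    Measurable (pastGap Y Ytil kstar n k) := by
  unfold pastGap
  split_ifs
  · exact measurable_gap hY hYt _
  · exact measurable_natCast_ennreal (hYt _)

theorem measurable_envelope {Ω : Type*} [MeasurableSpace Ω] {Y Ytil : ℤ → Ω → ℕ}
    (hY : ∀ t, Measurable (Y t)) (hYt : ∀ t, Measurable (Ytil t)) (kstar : ℤ)
    (a : ℕ → ℝ≥0∞) (L c' : ℝ≥0∞) (n : ℕ) :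
    Measurable (envelope Y Ytil kstar a L c' n) := by
  unfold envelope
  exact ((measurable_gap hY hYt _).mul (measurable_const.add (Measurable.tsum fun k =>
    (measurable_natCast_ennreal (hYt _)).const_mul _))).add
    ((((measurable_natCast_ennreal (hY _)).mul_const _).add measurable_const).mul
      (Measurable.tsum fun k => (measurable_pastGap hY hYt _ _ _).const_mul _))

/-- The expected envelope is bounded by a multiple of the gap rate `u n` plus a convolution-type sum
of the coefficients with `u`. The hypothesis `hgap` is applied with `Z` equal to `1`, `Y_t` or a past value of `Ỹ`. -/
theorem lintegral_envelope_le {Ω : Type*} [MeasurableSpace Ω] {μ : Measure Ω}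
    [IsProbabilityMeasure μ] {Y Ytil : ℤ → Ω → ℕ}
    (hY : ∀ t, Measurable (Y t)) (hYt : ∀ t, Measurable (Ytil t)) (kstar : ℤ)
    (a : ℕ → ℝ≥0∞) (L c' : ℝ≥0∞) {B C₁ : ℝ≥0∞} {u : ℕ → ℝ≥0∞} (hB : 1 ≤ B)
    (hYB : ∀ t, ∫⁻ ω, (Y t ω : ℝ≥0∞) ^ 3 ∂μ ≤ B)
    (hYtB : ∀ t, ∫⁻ ω, (Ytil t ω : ℝ≥0∞) ^ 3 ∂μ ≤ B)
    (hgap : ∀ Z : Ω → ℕ, Measurable Z → ∫⁻ ω, (Z ω : ℝ≥0∞) ^ 3 ∂μ ≤ B → ∀ m : ℕ,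
      ∫⁻ ω, (Z ω : ℝ≥0∞) * gap Y Ytil (kstar + (m + 1 : ℕ)) ω ∂μ ≤ C₁ * u m) (n : ℕ) :
    ∫⁻ ω, envelope Y Ytil kstar a L c' n ω ∂μ ≤
      (L + ∑' k, a k) * C₁ * u n +
        (c' + 1) * ∑' k, a k * (if k < n then C₁ * u (n - k - 1) else 2 * B) := by
  set t : ℤ := kstar + (n + 1 : ℕ) with ht
  set w : ℕ → ℝ≥0∞ := fun k => if k < n then C₁ * u (n - k - 1) else 2 * B with hw
  have hone : ∫⁻ _ω : Ω, ((1 : ℕ) : ℝ≥0∞) ^ 3 ∂μ ≤ B := by simpa using hB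
  have hpg : ∀ Z : Ω → ℕ, Measurable Z → ∫⁻ ω, (Z ω : ℝ≥0∞) ^ 3 ∂μ ≤ B → ∀ k,
      ∫⁻ ω, (Z ω : ℝ≥0∞) * pastGap Y Ytil kstar n k ω ∂μ ≤ w k := by
    intro Z hZ hZB k
    simp only [hw, pastGap]
    split_ifs with hk
    · have h := hgap Z hZ hZB (n - k - 1)
      rwa [show n - k - 1 + 1 = n - k by omega] at h
    · exact lintegral_mul_le_of_cube hZ hZB (hYtB _)
  have hgm := measurable_gap hY hYt
  have hpm := measurable_pastGap hY hYt kstar n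
  have hYm := fun t => measurable_natCast_ennreal (hY t)
  have hYtm := fun t => measurable_natCast_ennreal (hYt t)
  -- Every term becomes an integer-valued variable times a gap or a `pastGap`.
  have hexp : ∀ ω, envelope Y Ytil kstar a L c' n ω =
      L * gap Y Ytil t ω + ∑' k : ℕ, a k * ((Ytil (t - 1 - k) ω : ℝ≥0∞) * gap Y Ytil t ω) +
      (c' * ∑' k : ℕ, a k * ((Y t ω : ℝ≥0∞) * pastGap Y Ytil kstar n k ω) +
        ∑' k : ℕ, a k * pastGap Y Ytil kstar n k ω) := by
    intro ω
    simp only [envelope, mul_add, add_mul, one_mul, ← ht]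
    congr 1
    · congr 1
      · exact mul_comm _ _
      · rw [← ENNReal.tsum_mul_left]
        exact tsum_congr fun k => by ring
    · congr 1
      rw [mul_comm (Y t ω : ℝ≥0∞), mul_assoc, ← ENNReal.tsum_mul_left]
      congr 1
      exact tsum_congr fun k => by ring
  have m1 : Measurable fun ω => ∑' k : ℕ, a k * ((Ytil (t - 1 - k) ω : ℝ≥0∞) * gap Y Ytil t ω) :=
    Measurable.tsum fun k => ((hYtm _).mul (hgm _)).const_mul _
  have m2 : Measurable fun ω =>
      ∑' k : ℕ, a k * ((Y t ω : ℝ≥0∞) * pastGap Y Ytil kstar n k ω) :=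
    Measurable.tsum fun k => ((hYm _).mul (hpm _)).const_mul _
  have m3 : Measurable fun ω => L * gap Y Ytil t ω +
      ∑' k : ℕ, a k * ((Ytil (t - 1 - k) ω : ℝ≥0∞) * gap Y Ytil t ω) :=
    ((hgm t).const_mul L).add m1
  simp only [hexp]
  rw [lintegral_add_left m3, lintegral_add_left ((hgm t).const_mul L),
    lintegral_add_left (m2.const_mul c'), lintegral_const_mul _ (hgm t), lintegral_const_mul _ m2,
    add_mul L, add_mul (L * C₁), add_mul c', one_mul, mul_assoc L]
  gcongr
  · have h := hgap (fun _ => 1) measurable_const hone n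
    simp only [Nat.cast_one, one_mul] at h
    exact h
  · rw [mul_assoc, ← ENNReal.tsum_mul_right]
    exact lintegral_tsum_mul_le a (fun k => (hYtm _).mul (hgm _))
      fun k => hgap _ (hYt _) (hYtB _) n
  · exact lintegral_tsum_mul_le a (fun k => (hYm _).mul (hpm _)) (hpg _ (hY _) (hYB _))
  · refine lintegral_tsum_mul_le a hpm fun k => ?_
    simpa using hpg (fun _ => 1) measurable_const hone k

/-! ### Summability of the expected envelopes -/

theorem tsum_shifted (h : ℕ → ℝ≥0∞) (k : ℕ) :
    ∑' n : ℕ, (if k < n then h (n - k - 1) else 0) = ∑' m, h m := by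
  rw [← ENNReal.summable.sum_add_tsum_nat_add' (k := k + 1)
    (f := fun n => if k < n then h (n - k - 1) else 0)]
  rw [Finset.sum_eq_zero, zero_add]
  · refine tsum_congr fun m => ?_
    rw [if_pos (by omega), show m + (k + 1) - k - 1 = m by omega]
  · intro i hi
    exact if_neg (by have := Finset.mem_range.1 hi; omega)

/-- Logarithmically weighted summability of the convolution-type sum (`v n = 1/(n+1)` in the
application). After exchanging the sums, the terms `k < n` are handled by monotonicity of `v`, and the
remaining ones by trading part of the weight `v n` for a moment `s k` of the coefficients. -/
theorem tsum_convolution_ne_top {a u v s q : ℕ → ℝ≥0∞} {C₁ B₂ : ℝ≥0∞}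
    (hC : C₁ ≠ ∞) (hB : B₂ ≠ ∞) (ha : ∑' k, a k ≠ ∞) (has : ∑' k, a k * s k ≠ ∞)
    (hu : ∑' n, v n * u n ≠ ∞) (hq : ∑' n, q n ≠ ∞)
    (hv : ∀ m n, m ≤ n → v n ≤ v m) (hvq : ∀ n k, n ≤ k → v n ≤ s k * q n) :
    ∑' n, v n * ∑' k, a k * (if k < n then C₁ * u (n - k - 1) else B₂) ≠ ∞ := by
  have hbound : ∀ n k, v n * (a k * (if k < n then C₁ * u (n - k - 1) else B₂)) ≤
      a k * (C₁ * (if k < n then v (n - k - 1) * u (n - k - 1) else 0)) +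
        B₂ * (a k * s k) * q n := by
    intro n k
    split_ifs with hk
    · refine le_add_right ?_
      calc v n * (a k * (C₁ * u (n - k - 1))) ≤ v (n - k - 1) * (a k * (C₁ * u (n - k - 1))) := by
            gcongr; exact hv _ _ (by omega)
        _ = _ := by ring
    · refine le_add_left ?_
      calc v n * (a k * B₂) ≤ (s k * q n) * (a k * B₂) := by
            gcongr; exact hvq _ _ (by omega)
        _ = _ := by ring
  have hle : ∑' n, v n * ∑' k, a k * (if k < n then C₁ * u (n - k - 1) else B₂) ≤
      (∑' k, a k) * (C₁ * ∑' n, v n * u n) + B₂ * (∑' k, a k * s k) * ∑' n, q n := by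
    calc _ = ∑' k, ∑' n, v n * (a k * (if k < n then C₁ * u (n - k - 1) else B₂)) := by
          rw [ENNReal.tsum_comm]
          exact tsum_congr fun n => ENNReal.tsum_mul_left.symm
      _ ≤ ∑' k, ∑' n, (a k * (C₁ * (if k < n then v (n - k - 1) * u (n - k - 1) else 0)) +
            B₂ * (a k * s k) * q n) :=
          ENNReal.tsum_le_tsum fun k => ENNReal.tsum_le_tsum fun n => hbound n k
      _ = _ := by
          simp only [ENNReal.tsum_add, ENNReal.tsum_mul_left, ENNReal.tsum_mul_right]
          simp only [tsum_shifted (fun m => v m * u m), ENNReal.tsum_mul_right]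
  refine ne_top_of_le_ne_top ?_ hle
  finiteness

theorem tsum_ofReal_rpow_ne_top {r : ℝ} (hr : r < -1) :
    ∑' n : ℕ, ENNReal.ofReal (((n + 1 : ℕ) : ℝ) ^ r) ≠ ∞ :=
  (((summable_nat_add_iff 1).2 (Real.summable_nat_rpow.2 hr))).tsum_ofReal_ne_top

/-- A series of nonnegative variables with finite total expectation converges almost surely. -/
theorem ae_summable_envelope {Ω : Type*} [MeasurableSpace Ω] {μ : Measure Ω} {X : ℕ → Ω → ℝ≥0∞}
    (hX : ∀ n, Measurable (X n))
    (hsum : ∑' n : ℕ, ENNReal.ofReal (((n + 1 : ℕ) : ℝ)⁻¹) * ∫⁻ ω, X n ω ∂μ ≠ ∞) :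
    ∀ᵐ ω ∂μ, (∀ n, X n ω ≠ ∞) ∧ Summable fun n : ℕ => (X n ω).toReal / ((n : ℝ) + 1) := by
  have hint : ∫⁻ ω, ∑' n : ℕ, ENNReal.ofReal (((n + 1 : ℕ) : ℝ)⁻¹) * X n ω ∂μ ≠ ∞ :=
    ne_top_of_le_ne_top hsum (lintegral_tsum_mul_le _ hX fun n => le_rfl)
  have hmeas : Measurable fun ω => ∑' n : ℕ, ENNReal.ofReal (((n + 1 : ℕ) : ℝ)⁻¹) * X n ω :=
    Measurable.tsum fun n => (hX n).const_mul _
  filter_upwards [ae_lt_top hmeas hint] with ω hω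
  constructor
  · intro n hn
    have h := ENNReal.ne_top_of_tsum_ne_top hω.ne n
    refine h ?_
    rw [hn]
    exact ENNReal.mul_top (by rw [ne_eq, ENNReal.ofReal_eq_zero, not_le]; positivity)
  · refine (ENNReal.summable_toReal hω.ne).congr fun n => ?_
    rw [ENNReal.toReal_mul, ENNReal.toReal_ofReal (by positivity), inv_mul_eq_div]
    push_cast
    rfl

/-- (Almost sure approximation of the truncated log-likelihood by the
stationary one.)  Under D(Θ) and A₀(Θ) with `α_j^{(0)} = O(j^{−γ})`, `γ > 3/2`, if `Y` has
uniformly bounded moments of every order, the strictly stationary process `Ỹ` has finite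
moments of every order, and the coupling bound
`E|Y_{k*+ℓ} − Ỹ_{k*+ℓ}| ≤ C inf_{1≤p≤ℓ}(α^{ℓ/p} + Σ_{k≥p} α_k)` holds, then almost surely
`(1/n) sup_{θ∈Θ} |Σ_{t=k*+1}^{k*+n} (ℓ̂_t(θ) − ℓ̃_t(θ))| → 0`, i.e. the normalized partial
sums converge to `0` uniformly on `Θ`. -/
theorem loglik_stationary_approximation {d : ℕ} {Ω : Type*} [MeasurableSpace Ω]
    (μ : Measure Ω) [IsProbabilityMeasure μ]
    (Θ : Set (Fin d → ℝ)) (hΘ : IsCompact Θ)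
    (f : (Fin d → ℝ) → (ℕ → ℝ) → ℝ)
    (hfcont : ∀ y : ℕ → ℝ, ContinuousOn (fun θ => f θ y) Θ)
    -- Assumption D(Θ)
    (c : ℝ) (hc : 0 < c) (hD : ∀ θ ∈ Θ, ∀ y : ℕ → ℝ, (∀ k, 0 ≤ y k) → c ≤ f θ y)
    -- Assumption A₀(Θ)
    (α : ℕ → ℝ) (hα : ∀ k, 0 ≤ α k) (hαsum : Summable α)
    (hαlt : (∑' k : ℕ, α (k + 1)) < 1)
    (hbdd0 : BddAbove ((fun θ => f θ (fun _ => 0)) '' Θ))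
    (hlip : ∀ θ ∈ Θ, ∀ y y' : ℕ → ℝ, (∀ k, 0 ≤ y k) → (∀ k, 0 ≤ y' k) →
      ENNReal.ofReal |f θ y - f θ y'| ≤ ∑' k : ℕ, ENNReal.ofReal (α (k + 1) * |y k - y' k|))
    (γ : ℝ) (hγ : 3 / 2 < γ) (K : ℝ) (hdecay : ∀ j : ℕ, 1 ≤ j → α j ≤ K * (j : ℝ) ^ (-γ))
    (kstar : ℤ)
    -- the processes
    (Y Ytil : ℤ → Ω → ℕ) (hYmeas : ∀ t, Measurable (Y t)) (hYtilmeas : ∀ t, Measurable (Ytil t))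
    -- `Ỹ` strictly stationary
    (hstat : MeasurePreserving shiftZ (Measure.map (fun ω (t : ℤ) => Ytil t ω) μ)
      (Measure.map (fun ω (t : ℤ) => Ytil t ω) μ))
    -- uniformly bounded moments of every order
    (hmomY : ∀ r : ℕ, 1 ≤ r → ∃ B : ℝ≥0∞, B < ∞ ∧ ∀ t : ℤ, ∫⁻ ω, (Y t ω : ℝ≥0∞) ^ r ∂μ ≤ B)
    (hmomYtil : ∀ r : ℕ, 1 ≤ r → ∫⁻ ω, (Ytil 0 ω : ℝ≥0∞) ^ r ∂μ < ∞)
    -- the coupling bound from the stationary-approximation lemma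
    (C : ℝ) (hC : 0 < C)
    (hcoupling : ∀ ℓ : ℕ, 1 ≤ ℓ → ∀ p : ℕ, 1 ≤ p → p ≤ ℓ →
      ∫⁻ ω, ENNReal.ofReal |(Y (kstar + ℓ) ω : ℝ) - (Ytil (kstar + ℓ) ω : ℝ)| ∂μ ≤
        ENNReal.ofReal (C * ((∑' k : ℕ, α (k + 1)) ^ ((ℓ : ℝ) / p) + ∑' k : ℕ, α (p + k)))) :
    ∀ᵐ ω ∂μ, TendstoUniformlyOn
      (fun (n : ℕ) (θ : Fin d → ℝ) => (1 / (n : ℝ)) *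
        ∑ t ∈ Finset.Icc (kstar + 1) (kstar + n),
          (((Y t ω : ℝ) * Real.log (f θ (pastTrunc Y kstar t ω)) - f θ (pastTrunc Y kstar t ω)) -
            ((Ytil t ω : ℝ) * Real.log (f θ (past Ytil t ω)) - f θ (past Ytil t ω))))
      (fun _ => 0) atTop Θ := by
  have hs := summable_mul_sqrt_of_decay hα hγ hdecay
  obtain ⟨R, hR0, hR⟩ := exists_coupling_rate hα hαlt hs hC
  obtain ⟨M, hM⟩ := hbdd0
  obtain ⟨BY, hBY, hBYle⟩ := hmomY 3 (by norm_num)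
  set BT := ∫⁻ ω, (Ytil 0 ω : ℝ≥0∞) ^ 3 ∂μ with hBT
  have hBTlt : BT < ∞ := hmomYtil 3 (by norm_num)
  set B : ℝ≥0∞ := 1 + BY + BT with hB
  have hBtop : B ≠ ∞ := by finiteness
  have hYB : ∀ t, ∫⁻ ω, (Y t ω : ℝ≥0∞) ^ 3 ∂μ ≤ B := fun t =>
    (hBYle t).trans (le_add_right (le_add_left le_rfl))
  have hYtB : ∀ t, ∫⁻ ω, (Ytil t ω : ℝ≥0∞) ^ 3 ∂μ ≤ B := fun t =>
    (lintegral_stationary hYtilmeas hstat 3 t).le.trans (le_add_left le_rfl)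
  -- The gap at time `kstar + m + 1` has mean `O((m+1) ^ (-1/4))`; Cauchy–Schwarz halves the
  -- exponent.
  set u : ℕ → ℝ≥0∞ := fun m => ENNReal.ofReal (((m + 1 : ℕ) : ℝ) ^ (-(1 / 8) : ℝ)) with hu
  set v : ℕ → ℝ≥0∞ := fun m => ENNReal.ofReal (((m + 1 : ℕ) : ℝ)⁻¹) with hv
  set C₁ : ℝ≥0∞ := (4 * B) ^ (1 / 2 : ℝ) * ENNReal.ofReal R ^ (1 / 2 : ℝ) with hC₁
  have hC₁top : C₁ ≠ ∞ := by
    refine ENNReal.mul_ne_top (ENNReal.rpow_ne_top_of_nonneg (by norm_num) (by finiteness))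
      (ENNReal.rpow_ne_top_of_nonneg (by norm_num) (by finiteness))
  have hgap : ∀ Z : Ω → ℕ, Measurable Z → ∫⁻ ω, (Z ω : ℝ≥0∞) ^ 3 ∂μ ≤ B → ∀ m : ℕ,
      ∫⁻ ω, (Z ω : ℝ≥0∞) * gap Y Ytil (kstar + (m + 1 : ℕ)) ω ∂μ ≤ C₁ * u m := by
    intro Z hZ hZB m
    obtain ⟨p, hp1, hpl, hp⟩ := hR (m + 1) (by omega)
    have hδ := (hcoupling (m + 1) (by omega) p hp1 hpl).trans (ENNReal.ofReal_le_ofReal hp)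
    refine (lintegral_mul_gap_le hZ (hYmeas _) (hYtilmeas _) hZB (hYB _) (hYtB _)).trans ?_
    rw [hC₁, mul_assoc]
    refine mul_le_mul_right ((ENNReal.rpow_le_rpow hδ (by norm_num)).trans (le_of_eq ?_)) _
    rw [ENNReal.ofReal_mul hR0, ENNReal.mul_rpow_of_nonneg _ _ (by norm_num),
      ENNReal.ofReal_rpow_of_nonneg (by positivity : (0 : ℝ) ≤ ((m + 1 : ℕ) : ℝ) ^ (-(1 / 4) : ℝ))
        (by norm_num), ← Real.rpow_mul (by positivity)]
    norm_num [hu]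
  set a : ℕ → ℝ≥0∞ := fun k => ENNReal.ofReal (α (k + 1)) with ha
  set L := ENNReal.ofReal (|Real.log c| + M) with hL
  set c' := ENNReal.ofReal (1 / c) with hc'
  have hatop : ∑' k, a k ≠ ∞ := ((summable_nat_add_iff 1).2 hαsum).tsum_ofReal_ne_top
  have huv : ∑' n, v n * u n ≠ ∞ := by
    refine ne_of_eq_of_ne (tsum_congr fun n => ?_)
      (tsum_ofReal_rpow_ne_top (show (-(9 / 8) : ℝ) < -1 by norm_num))
    rw [hu, hv, ← ENNReal.ofReal_mul (by positivity), ← Real.rpow_neg_one,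
      ← Real.rpow_add (by positivity)]
    norm_num
  have hconv : ∑' n, v n * ∑' k, a k * (if k < n then C₁ * u (n - k - 1) else 2 * B) ≠ ∞ := by
    refine tsum_convolution_ne_top hC₁top (by finiteness) hatop
      (s := fun k => ENNReal.ofReal (((k + 1 : ℕ) : ℝ) ^ (1 / 2 : ℝ)))
      (q := fun n => ENNReal.ofReal (((n + 1 : ℕ) : ℝ) ^ (-(3 / 2) : ℝ))) ?_ huv
      (tsum_ofReal_rpow_ne_top (by norm_num)) ?_ ?_
    · simp only [ha, ← ENNReal.ofReal_mul (hα _)]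
      exact hs.tsum_ofReal_ne_top
    · intro m n hmn
      refine ENNReal.ofReal_le_ofReal (inv_anti₀ (by positivity) ?_)
      exact_mod_cast Nat.succ_le_succ hmn
    · intro n k hnk
      simp only [hv]
      rw [← ENNReal.ofReal_mul (by positivity)]
      refine ENNReal.ofReal_le_ofReal ?_
      -- `1/(n+1) = (n+1) ^ (1/2) * (n+1) ^ (-3/2)`, and `n ≤ k`.
      calc (((n + 1 : ℕ) : ℝ))⁻¹
          = ((n + 1 : ℕ) : ℝ) ^ (1 / 2 : ℝ) * ((n + 1 : ℕ) : ℝ) ^ (-(3 / 2) : ℝ) := by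
            rw [← Real.rpow_add (by positivity), ← Real.rpow_neg_one]
            norm_num
        _ ≤ _ := by gcongr
  have hsum : ∑' n, v n * ∫⁻ ω, envelope Y Ytil kstar a L c' n ω ∂μ ≠ ∞ := by
    have hle : ∑' n, v n * ∫⁻ ω, envelope Y Ytil kstar a L c' n ω ∂μ ≤
        (L + ∑' k, a k) * C₁ * (∑' n, v n * u n) + (c' + 1) *
          ∑' n, v n * ∑' k, a k * (if k < n then C₁ * u (n - k - 1) else 2 * B) := by
      rw [← ENNReal.tsum_mul_left, ← ENNReal.tsum_mul_left, ← ENNReal.tsum_add]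
      refine ENNReal.tsum_le_tsum fun n => ?_
      refine (mul_le_mul_right (lintegral_envelope_le hYmeas hYtilmeas kstar a L c'
        (le_add_right (le_add_right le_rfl)) hYB hYtB hgap n) (v n)).trans (le_of_eq ?_)
      ring
    refine ne_top_of_le_ne_top ?_ hle
    finiteness
  filter_upwards [ae_summable_envelope (measurable_envelope hYmeas hYtilmeas kstar a L c') hsum]
    with ω hω
  obtain ⟨hfin, hsummable⟩ := hω
  have hlim := tendsto_average_of_summable (fun n => ENNReal.toReal_nonneg) hsummable
  rw [Metric.tendstoUniformlyOn_iff]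
  intro ε hε
  filter_upwards [hlim.eventually_lt_const hε] with n hn θ hθ
  rw [dist_zero_left, Real.norm_eq_abs, abs_mul, abs_of_nonneg (by positivity : (0 : ℝ) ≤ 1 / n)]
  refine lt_of_le_of_lt (mul_le_mul_of_nonneg_left ?_ (by positivity)) hn
  -- It remains to reindex `t = kstar + (i + 1)` and to insert the envelope bound termwise.
  refine (Finset.abs_sum_le_sum_abs _ _).trans (le_of_eq_of_le ?_ (Finset.sum_le_sum
    fun i _ => (ENNReal.ofReal_le_iff_le_toReal (hfin i)).1
      (ofReal_loglik_sub_le hc hD hα (fun θ hθ => hM ⟨θ, hθ, rfl⟩) hlip kstar Y Ytil hθ i ω rfl)))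
  symm
  refine Finset.sum_bij (fun i _ => kstar + ((i + 1 : ℕ) : ℤ)) ?_ ?_ ?_ ?_
  · intro i hi
    have := Finset.mem_range.1 hi
    rw [Finset.mem_Icc]
    omega
  · intro i _ j _ hij
    omega
  · intro t ht
    rw [Finset.mem_Icc] at ht
    exact ⟨(t - kstar - 1).toNat, Finset.mem_range.2 (by omega), by omega⟩
  · intro i _
    rfl

end
end

section
/- Let p, q ≥ 1 be integers, α_0 > 0, and α_1, …, α_p, β_1, …, β_q ≥ 0 with Σ_{k=1}^p α_k + Σ_{k=1}^q β_k < 1. Then there exist nonnegative reals (ψ_k)_{k≥0} with ψ_0 = α_0 / (1 − Σ_{k=1}^p α_k) > 0 and Σ_{k≥1} ψ_k = (Σ_{k=1}^q β_k)/(1 − Σ_{k=1}^p α_k) < 1 such that for every pair of bounded sequences (λ_t)_{t∈ℤ} and (Y_t)_{t∈ℤ} of nonnegative reals satisfying the INGARCH(p,q) recursion λ_t = α_0 + Σ_{k=1}^p α_k λ_{t−k} + Σ_{k=1}^q β_k Y_{t−k} for all t ∈ ℤ, one has λ_t = ψ_0 + Σ_{k≥1} ψ_k Y_{t−k} for all t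 ∈ ℤ. -/
/-!
The coefficients `ψ_k` are those of the power series `B(z) / (1 - A(z))`, where
`A(z) = ∑ α_k z^k` and `B(z) = ∑ β_k z^k`. They are built as the solution `c` of the recurrence
`c = b + A c`, i.e. `c_n = β_n + ∑ α_i c_{n-i}`, extended by zero to `ℤ` so that shifts of the
index are bijections.

* Summing the recurrence over `n < N` and using `c ≥ 0` bounds the partial sums by
  `S_N ≤ ∑ β + (∑ α) S_N`, so `c` is summable (`summable_ingarchCoeffInt`).
* Convolving the recurrence with a bounded `Y` shows that `F = c ⋆ Y` satisfies
  `F_t = ∑ β_j Y_{t-j} + ∑ α_i F_{t-i}` (`conv_recursion`). For `Y = 1` this evaluates `∑ c_n`.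
* Hence `α₀ / (1 - ∑ α) + F` solves the INGARCH recursion, and the difference with any other
  bounded solution is a bounded solution of `d_t = ∑ α_i d_{t-i}`, which vanishes because
  `∑ α < 1` (`eq_zero_of_bounded_recursion`).
-/

/-- The power series coefficients of `(∑ β_k z^k) / (1 - ∑ α_k z^k)`, defined by the recurrence
obtained on multiplying by the denominator. The entry `αc i` is the coefficient at lag `i + 1`,
and likewise for `βc`. -/
noncomputable def ingarchCoeff {p q : ℕ} (αc : Fin p → ℝ) (βc : Fin q → ℝ) : ℕ → ℝ
  | n => (∑ j : Fin q, if n = (j : ℕ) + 1 then βc j else 0) +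
      ∑ i : Fin p, if _h : (i : ℕ) + 1 ≤ n then αc i * ingarchCoeff αc βc (n - (i + 1)) else 0
  decreasing_by omega

/-- The sequence `ingarchCoeff` extended by zero to negative indices. -/
noncomputable def ingarchCoeffInt {p q : ℕ} (αc : Fin p → ℝ) (βc : Fin q → ℝ) (m : ℤ) : ℝ :=
  if 0 ≤ m then ingarchCoeff αc βc m.toNat else 0

section Coefficients

variable {p q : ℕ} {αc : Fin p → ℝ} {βc : Fin q → ℝ}

lemma ingarchCoeff_nonneg (hαc : ∀ i, 0 ≤ αc i) (hβc : ∀ i, 0 ≤ βc i) (n : ℕ) :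
    0 ≤ ingarchCoeff αc βc n := by
  induction n using Nat.strong_induction_on with
  | _ n ih =>
    rw [ingarchCoeff]
    refine add_nonneg (Finset.sum_nonneg fun j _ => ?_) (Finset.sum_nonneg fun i _ => ?_)
    · split_ifs
      exacts [hβc j, le_rfl]
    · split_ifs with h
      exacts [mul_nonneg (hαc i) (ih _ (by omega)), le_rfl]

lemma ingarchCoeff_zero : ingarchCoeff αc βc 0 = 0 := by
  rw [ingarchCoeff]
  simp

lemma ingarchCoeffInt_natCast (n : ℕ) : ingarchCoeffInt αc βc n = ingarchCoeff αc βc n := by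
  simp [ingarchCoeffInt]

lemma ingarchCoeffInt_of_neg {m : ℤ} (h : m < 0) : ingarchCoeffInt αc βc m = 0 := by
  simp [ingarchCoeffInt, h]

/-- On `ℤ` the recurrence holds at every index, with no case distinction for small indices. -/
lemma ingarchCoeffInt_rec (m : ℤ) :
    ingarchCoeffInt αc βc m = (∑ j : Fin q, if m = ((j + 1 : ℕ) : ℤ) then βc j else 0) +
      ∑ i : Fin p, αc i * ingarchCoeffInt αc βc (m - ((i + 1 : ℕ) : ℤ)) := by
  rcases lt_or_ge m 0 with hm | hm
  · rw [ingarchCoeffInt_of_neg hm, Finset.sum_eq_zero, Finset.sum_eq_zero, add_zero]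
    · intro i _
      rw [ingarchCoeffInt_of_neg (by omega), mul_zero]
    · intro j _
      rw [if_neg (by omega)]
  · lift m to ℕ using hm
    rw [ingarchCoeffInt_natCast, ingarchCoeff]
    congr 1
    · simp only [Nat.cast_inj]
    · refine Finset.sum_congr rfl fun i _ => ?_
      split_ifs with h
      · rw [← Nat.cast_sub h, ingarchCoeffInt_natCast]
      · rw [ingarchCoeffInt_of_neg (by omega), mul_zero]

lemma sum_range_ingarchCoeffInt_sub (N k : ℕ) :
    ∑ n ∈ Finset.range N, ingarchCoeffInt αc βc ((n : ℤ) - k) =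
      ∑ n ∈ Finset.range (N - k), ingarchCoeff αc βc n := by
  induction N with
  | zero => simp
  | succ N ih =>
    rw [Finset.sum_range_succ, ih]
    rcases lt_or_ge N k with h | h
    · rw [ingarchCoeffInt_of_neg (by omega), add_zero, show N + 1 - k = N - k by omega]
    · rw [Nat.succ_sub h, Finset.sum_range_succ, ← Nat.cast_sub h, ingarchCoeffInt_natCast]

lemma summable_ingarchCoeff (hαc : ∀ i, 0 ≤ αc i) (hβc : ∀ i, 0 ≤ βc i)
    (ha : ∑ i, αc i < 1) : Summable (ingarchCoeff αc βc) := by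
  have h0 := ingarchCoeff_nonneg hαc hβc
  refine summable_of_sum_range_le (c := (∑ i, βc i) / (1 - ∑ i, αc i)) h0 fun N => ?_
  rw [le_div_iff₀ (by linarith)]
  have hβ : ∑ n ∈ Finset.range N, ∑ j : Fin q,
      (if (n : ℤ) = ((j + 1 : ℕ) : ℤ) then βc j else 0) ≤ ∑ j, βc j := by
    rw [Finset.sum_comm]
    refine Finset.sum_le_sum fun j _ => ?_
    simp only [Nat.cast_inj, Finset.sum_ite_eq']
    split_ifs
    exacts [le_rfl, hβc j]
  have hα : ∑ n ∈ Finset.range N, ∑ i : Fin p,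
      αc i * ingarchCoeffInt αc βc ((n : ℤ) - ((i + 1 : ℕ) : ℤ)) ≤
        (∑ i, αc i) * ∑ n ∈ Finset.range N, ingarchCoeff αc βc n := by
    rw [Finset.sum_comm, Finset.sum_mul]
    refine Finset.sum_le_sum fun i _ => ?_
    rw [← Finset.mul_sum, sum_range_ingarchCoeffInt_sub]
    refine mul_le_mul_of_nonneg_left ?_ (hαc i)
    exact Finset.sum_le_sum_of_subset_of_nonneg (Finset.range_mono (Nat.sub_le _ _))
      fun n _ _ => h0 n
  have hS : ∑ n ∈ Finset.range N, ingarchCoeff αc βc n = _ :=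
    Finset.sum_congr rfl fun n _ =>
      (ingarchCoeffInt_natCast n).symm.trans (ingarchCoeffInt_rec (αc := αc) (βc := βc) n)
  rw [Finset.sum_add_distrib] at hS
  linarith

lemma ingarchCoeffInt_eq_zero_of_notMem {m : ℤ} (hm : m ∉ Set.range ((↑) : ℕ → ℤ)) :
    ingarchCoeffInt αc βc m = 0 :=
  ingarchCoeffInt_of_neg (by
    by_contra! h
    exact hm ⟨m.toNat, Int.toNat_of_nonneg h⟩)

lemma summable_ingarchCoeffInt (hαc : ∀ i, 0 ≤ αc i) (hβc : ∀ i, 0 ≤ βc i)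
    (ha : ∑ i, αc i < 1) : Summable (ingarchCoeffInt αc βc) := by
  rw [← Function.Injective.summable_iff Nat.cast_injective
    fun m hm => ingarchCoeffInt_eq_zero_of_notMem hm]
  exact (summable_ingarchCoeff hαc hβc ha).congr fun n => (ingarchCoeffInt_natCast n).symm

end Coefficients

lemma summable_mul_of_bounded {C : ℤ → ℝ} (hC : Summable C) {Y : ℤ → ℝ} {K : ℝ}
    (hY : ∀ t, |Y t| ≤ K) (t : ℤ) : Summable fun m => C m * Y (t - m) := by
  refine Summable.of_norm_bounded (hC.abs.mul_right K) fun m => ?_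
  rw [Real.norm_eq_abs, abs_mul]
  exact mul_le_mul_of_nonneg_left (hY _) (abs_nonneg _)

/-- If `C = b + A C`, then the convolution `F = C ⋆ Y` satisfies `F = b ⋆ Y + A F`. -/
lemma conv_recursion {p q : ℕ} {αc : Fin p → ℝ} {βc : Fin q → ℝ} {C : ℤ → ℝ} (hC : Summable C)
    (hrec : ∀ m, C m = (∑ j : Fin q, if m = ((j + 1 : ℕ) : ℤ) then βc j else 0) +
      ∑ i : Fin p, αc i * C (m - ((i + 1 : ℕ) : ℤ)))
    {Y : ℤ → ℝ} {K : ℝ} (hY : ∀ t, |Y t| ≤ K) (t : ℤ) :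
    ∑' m, C m * Y (t - m) = (∑ j : Fin q, βc j * Y (t - ((j + 1 : ℕ) : ℤ))) +
      ∑ i : Fin p, αc i * ∑' m, C m * Y (t - ((i + 1 : ℕ) : ℤ) - m) := by
  have hb : HasSum (fun m : ℤ => ∑ j : Fin q,
      if m = ((j + 1 : ℕ) : ℤ) then βc j * Y (t - ((j + 1 : ℕ) : ℤ)) else 0)
      (∑ j : Fin q, βc j * Y (t - ((j + 1 : ℕ) : ℤ))) :=
    hasSum_sum fun j _ => hasSum_ite_eq _ _
  have ha : HasSum (fun m : ℤ => ∑ i : Fin p,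
      αc i * (C (m - ((i + 1 : ℕ) : ℤ)) * Y (t - m)))
      (∑ i : Fin p, αc i * ∑' m, C m * Y (t - ((i + 1 : ℕ) : ℤ) - m)) := by
    refine hasSum_sum fun i _ => HasSum.mul_left _ ?_
    have h := (Equiv.subRight ((i + 1 : ℕ) : ℤ)).hasSum_iff.mpr
      (summable_mul_of_bounded hC hY (t - ((i + 1 : ℕ) : ℤ))).hasSum
    refine h.congr_fun fun m => ?_
    simp only [Function.comp_apply, Equiv.subRight_apply]
    congr 2
    ring
  refine ((hb.add ha).congr_fun fun m => ?_).tsum_eq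
  rw [hrec m, add_mul, Finset.sum_mul, Finset.sum_mul]
  congr 1
  · refine Finset.sum_congr rfl fun j _ => ?_
    split_ifs with h
    · rw [h]
    · rw [zero_mul]
  · exact Finset.sum_congr rfl fun i _ => mul_assoc _ _ _

/-- A bounded two-sided solution of the homogeneous recursion is zero: each use of the recursion
improves the bound by the factor `∑ α < 1`. -/
lemma eq_zero_of_bounded_recursion {p : ℕ} {αc : Fin p → ℝ} (hαc : ∀ i, 0 ≤ αc i)
    (ha : ∑ i, αc i < 1) {d : ℤ → ℝ} {K : ℝ} (hd : ∀ t, |d t| ≤ K)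
    (hrec : ∀ t, d t = ∑ i : Fin p, αc i * d (t - ((i + 1 : ℕ) : ℤ))) (t : ℤ) : d t = 0 := by
  have key : ∀ n : ℕ, ∀ t, |d t| ≤ (∑ i, αc i) ^ n * K := by
    intro n
    induction n with
    | zero => simpa using hd
    | succ n ih =>
      intro t
      rw [hrec t, pow_succ', mul_assoc, Finset.sum_mul]
      refine (Finset.abs_sum_le_sum_abs _ _).trans (Finset.sum_le_sum fun i _ => ?_)
      rw [abs_mul, abs_of_nonneg (hαc i)]
      exact mul_le_mul_of_nonneg_left (ih _) (hαc i)
  have hlim := (tendsto_pow_atTop_nhds_zero_of_lt_one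
    (Finset.sum_nonneg fun i _ => hαc i) ha).mul_const K
  rw [zero_mul] at hlim
  exact abs_nonpos_iff.mp (ge_of_tendsto' hlim fun n => key n t)

/-- (INGARCH(p,q) as a linear Poisson autoregression.)  Let `p, q ≥ 1`,
`α_0 > 0`, and `α_1, …, α_p, β_1, …, β_q ≥ 0` with `Σ α_k + Σ β_k < 1`.  Then there exist
nonnegative reals `(ψ_k)_{k≥0}` with `ψ_0 = α_0/(1 − Σ α_k) > 0` and
`Σ_{k≥1} ψ_k = (Σ β_k)/(1 − Σ α_k) < 1`, such that every pair of bounded nonnegative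
sequences `(λ_t)_{t∈ℤ}`, `(Y_t)_{t∈ℤ}` satisfying the INGARCH(p,q) recursion
`λ_t = α_0 + Σ_{k=1}^p α_k λ_{t−k} + Σ_{k=1}^q β_k Y_{t−k}` for all `t` also satisfies
`λ_t = ψ_0 + Σ_{k≥1} ψ_k Y_{t−k}` for all `t`. -/
theorem ingarch_linear_representation (p q : ℕ) (hp : 1 ≤ p) (hq : 1 ≤ q)
    (α0 : ℝ) (hα0 : 0 < α0) (αc : Fin p → ℝ) (βc : Fin q → ℝ)
    (hαc : ∀ i, 0 ≤ αc i) (hβc : ∀ i, 0 ≤ βc i)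
    (hsum : (∑ i, αc i) + (∑ i, βc i) < 1) :
    ∃ ψ : ℕ → ℝ, (∀ k, 0 ≤ ψ k) ∧
      ψ 0 = α0 / (1 - ∑ i, αc i) ∧ 0 < ψ 0 ∧
      Summable (fun k : ℕ => ψ (k + 1)) ∧
      (∑' k : ℕ, ψ (k + 1)) = (∑ i, βc i) / (1 - ∑ i, αc i) ∧
      (∑' k : ℕ, ψ (k + 1)) < 1 ∧
      ∀ lam Y : ℤ → ℝ, (∀ t, 0 ≤ lam t) → (∀ t, 0 ≤ Y t) →
        (∃ B : ℝ, ∀ t, lam t ≤ B ∧ Y t ≤ B) →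
        (∀ t : ℤ, lam t = α0 + (∑ i : Fin p, αc i * lam (t - (i + 1 : ℕ)))
            + ∑ i : Fin q, βc i * Y (t - (i + 1 : ℕ))) →
        ∀ t : ℤ, lam t = ψ 0 + ∑' k : ℕ, ψ (k + 1) * Y (t - (k + 1)) := by
  have ha : ∑ i, αc i < 1 := by
    linarith [Finset.sum_nonneg fun i (_ : i ∈ Finset.univ) => hβc i]
  have ha' : 0 < 1 - ∑ i, αc i := by linarith
  set c := ingarchCoeff αc βc with hc
  set C := ingarchCoeffInt αc βc with hC
  have hcs : Summable c := summable_ingarchCoeff hαc hβc ha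
  have hCs : Summable C := summable_ingarchCoeffInt hαc hβc ha
  have hrec : ∀ m, C m = _ := ingarchCoeffInt_rec
  have hconv : ∀ (Y : ℤ → ℝ) (K : ℝ), (∀ t, |Y t| ≤ K) → ∀ t,
      ∑' m, C m * Y (t - m) = ∑' k : ℕ, c (k + 1) * Y (t - (k + 1)) := by
    intro Y K hY t
    have hs := summable_mul_of_bounded hCs hY t
    have hsupp : ∀ m ∉ Set.range ((↑) : ℕ → ℤ), C m * Y (t - m) = 0 := fun m hm => by
      rw [hC, ingarchCoeffInt_eq_zero_of_notMem hm, zero_mul]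
    have hinj : Function.Injective ((↑) : ℕ → ℤ) := Nat.cast_injective
    have h1 := ((hinj.hasSum_iff hsupp).mpr hs.hasSum)
    have h2 : HasSum (fun n : ℕ => c n * Y (t - n)) (∑' m, C m * Y (t - m)) :=
      h1.congr_fun fun n => by
        simp only [Function.comp_apply, hC, hc, ingarchCoeffInt_natCast]
    rw [← h2.tsum_eq, h2.summable.tsum_eq_zero_add, hc, ingarchCoeff_zero, zero_mul, zero_add]
    simp only [Nat.cast_add, Nat.cast_one]
  have htot : ∑' k : ℕ, c (k + 1) = (∑ i, βc i) / (1 - ∑ i, αc i) := by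
    have h1 := conv_recursion hCs hrec (Y := fun _ => 1) (K := 1) (by simp) 0
    have h2 := hconv (fun _ => 1) 1 (by simp) 0
    simp only [mul_one, ← Finset.sum_mul] at h1 h2
    rw [← h2, eq_div_iff ha'.ne']
    linarith
  refine ⟨fun n => if n = 0 then α0 / (1 - ∑ i, αc i) else c n, fun k => ?_, by simp,
    by simpa using div_pos hα0 ha', ?_, ?_, ?_, ?_⟩
  · dsimp only
    split_ifs
    exacts [(div_pos hα0 ha').le, ingarchCoeff_nonneg hαc hβc k]
  · simpa using (summable_nat_add_iff 1).mpr hcs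
  · simpa using htot
  · simp only [Nat.add_eq_zero_iff, one_ne_zero, and_false, if_false]
    rw [htot, div_lt_one ha']
    linarith
  · rintro lam Y hlam hY ⟨K, hK⟩ hlrec t
    simp only [Nat.add_eq_zero_iff, one_ne_zero, and_false, if_false, if_true]
    have hYK : ∀ t, |Y t| ≤ K := fun t => (abs_of_nonneg (hY t)).trans_le (hK t).2
    rw [← hconv Y K hYK t]
    set s := α0 / (1 - ∑ i, αc i) with hs
    -- the constant solves the recursion with zero input
    have hs' : s = α0 + (∑ i, αc i) * s := by
      rw [hs]
      field_simp
      ring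
    have hF : ∀ t, |∑' m, C m * Y (t - m)| ≤ ∑' m, |C m| * K := fun t =>
      tsum_of_norm_bounded (hCs.abs.mul_right K).hasSum fun m => by
        rw [Real.norm_eq_abs, abs_mul]
        exact mul_le_mul_of_nonneg_left (hYK (t - m)) (abs_nonneg _)
    have hd := eq_zero_of_bounded_recursion hαc ha
      (d := fun t => lam t - (s + ∑' m, C m * Y (t - m)))
      (K := K + (|s| + ∑' m, |C m| * K)) (fun t => ?_) (fun t => ?_) t
    · exact sub_eq_zero.mp hd
    · refine (abs_sub _ _).trans (add_le_add ?_ ((abs_add_le _ _).trans ?_))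
      · exact (abs_of_nonneg (hlam t)).trans_le (hK t).1
      · exact add_le_add le_rfl (hF t)
    · simp only [mul_sub, mul_add, Finset.sum_sub_distrib, Finset.sum_add_distrib,
        ← Finset.sum_mul]
      have h1 := conv_recursion hCs hrec hYK t
      have h2 := hlrec t
      linarith
end
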